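/- arXiv:1602.05738 — 4 statements merged into one kernel-verified Lean document; each statement's English description precedes it below -/
import Mathlib

section
/- Let F, C ⊆ ℤ² be such that F is finite and F ⊕ C = ℤ². Then there exist a set C' ⊆ ℤ² and a finite index subgroup Λ' ⊆ ℤ² such that F ⊕ C' = ℤ² and C' + Λ' = C'. (In other words, every finite subset of ℤ² that tiles ℤ² by translations also admits a periodic tiling.) -/
/-- `F ⊕ C = E` : every sum `f + c` (with `f ∈ F`, `c ∈ C`) lies in `E`, and every
element of `E` can be uniquely expressed as `f + c` with `f ∈ F` and `c ∈ C`. -/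
def TileOplus (F C E : Set (ℤ × ℤ)) : Prop :=
  (∀ f ∈ F, ∀ c ∈ C, f + c ∈ E) ∧
    ∀ e ∈ E, ∃! p : (ℤ × ℤ) × (ℤ × ℤ), p.1 ∈ F ∧ p.2 ∈ C ∧ p.1 + p.2 = e



open Filter Topology in
def HasMean {E : Type*} [NormedAddCommGroup E] [NormedSpace ℝ E] (a : ℕ → E) (l : E) : Prop :=
  Tendsto (fun N : ℕ => (N : ℝ)⁻¹ • ∑ n ∈ Finset.range N, a n) (hyperfilter ℕ : Filter ℕ) (𝓝 l)

namespace HasMean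
open Filter Topology

variable {E E' : Type*} [NormedAddCommGroup E] [NormedSpace ℝ E]
  [NormedAddCommGroup E'] [NormedSpace ℝ E']

theorem avg_norm_le {a : ℕ → E} {B : ℝ} (h : ∀ n, ‖a n‖ ≤ B) (N : ℕ) :
    ‖(N : ℝ)⁻¹ • ∑ n ∈ Finset.range N, a n‖ ≤ B := by
  have hB : 0 ≤ B := (norm_nonneg _).trans (h 0)
  rcases Nat.eq_zero_or_pos N with rfl | hN
  · simpa using hB
  · have hN' : (0 : ℝ) < N := by exact_mod_cast hN
    rw [norm_smul, norm_inv, Real.norm_natCast, inv_mul_le_iff₀ hN']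
    refine (norm_sum_le _ _).trans ?_
    refine (Finset.sum_le_sum (fun n _ => h n)).trans ?_
    simp

theorem exists_of_bdd [ProperSpace E] {a : ℕ → E} {B : ℝ} (h : ∀ n, ‖a n‖ ≤ B) :
    ∃ l, HasMean a l := by
  have hc := isCompact_closedBall (0 : E) B
  obtain ⟨l, -, hl⟩ := hc.ultrafilter_le_nhds
    ((hyperfilter ℕ).map (fun N : ℕ => (N : ℝ)⁻¹ • ∑ n ∈ Finset.range N, a n)) (by
      rw [le_principal_iff]
      refine Filter.Eventually.of_forall (f := (hyperfilter ℕ : Filter ℕ)) ?_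
      intro N
      simpa using avg_norm_le h N)
  exact ⟨l, hl⟩

theorem unique {a : ℕ → E} {l l' : E} (h : HasMean a l) (h' : HasMean a l') : l = l' :=
  tendsto_nhds_unique h h'

theorem map (T : E →L[ℝ] E') {a : ℕ → E} {l : E} (h : HasMean a l) :
    HasMean (fun n => T (a n)) (T l) := by
  have := (T.continuous.tendsto l).comp h
  refine this.congr ?_
  intro N
  simp

theorem const (l : E) : HasMean (fun _ => l) l := by
  refine tendsto_const_nhds.congr' ?_
  have : ∀ᶠ N : ℕ in (hyperfilter ℕ : Filter ℕ), 0 < N :=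
    (Nat.hyperfilter_le_atTop) (eventually_gt_atTop 0)
  filter_upwards [this] with N hN
  have hN' : (N : ℝ) ≠ 0 := by positivity
  rw [Finset.sum_const, Finset.card_range, ← Nat.cast_smul_eq_nsmul ℝ, smul_smul,
    inv_mul_cancel₀ hN', one_smul]

theorem add {a b : ℕ → E} {l m : E} (h : HasMean a l) (h' : HasMean b m) :
    HasMean (fun n => a n + b n) (l + m) := by
  refine (Tendsto.add h h').congr ?_
  intro N
  rw [Finset.sum_add_distrib, smul_add]

theorem neg {a : ℕ → E} {l : E} (h : HasMean a l) :
    HasMean (fun n => - a n) (-l) := by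
  refine (Tendsto.neg h).congr ?_
  intro N
  simp

theorem sub {a b : ℕ → E} {l m : E} (h : HasMean a l) (h' : HasMean b m) :
    HasMean (fun n => a n - b n) (l - m) := by
  simpa [sub_eq_add_neg] using h.add h'.neg

theorem sum {ι : Type*} (s : Finset ι) {a : ι → ℕ → E} {l : ι → E}
    (h : ∀ i ∈ s, HasMean (a i) (l i)) :
    HasMean (fun n => ∑ i ∈ s, a i n) (∑ i ∈ s, l i) := by
  classical
  induction s using Finset.induction_on with
  | empty => simpa using const (0 : E)
  | insert i s hi ih =>
    simp only [Finset.sum_insert hi]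
    exact (h i (by simp)).add (ih fun j hj => h j (by simp [hj]))

theorem le {a b : ℕ → ℝ} {l m : ℝ} (h : HasMean a l) (h' : HasMean b m)
    (hab : ∀ n, a n ≤ b n) : l ≤ m := by
  refine le_of_tendsto_of_tendsto' h h' ?_
  intro N
  simp only [smul_eq_mul]
  gcongr
  exact hab _

theorem norm_le {a : ℕ → E} {l : E} (h : HasMean a l) {B : ℝ} (hB : ∀ n, ‖a n‖ ≤ B) :
    ‖l‖ ≤ B :=
  le_of_tendsto' h.norm (avg_norm_le hB)

theorem shift_one {a : ℕ → E} {l : E} (h : HasMean a l) {B : ℝ} (hB : ∀ n, ‖a n‖ ≤ B) :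
    HasMean (fun n => a (n + 1)) l := by
  have h0 : Tendsto (fun N : ℕ => (N : ℝ)⁻¹ • (a N - a 0)) (hyperfilter ℕ : Filter ℕ) (𝓝 0) := by
    have h1 : Tendsto (fun N : ℕ => (N : ℝ)⁻¹ * (2 * B)) atTop (𝓝 0) := by
      simpa using (tendsto_inv_atTop_nhds_zero_nat (𝕜 := ℝ)).mul_const (2 * B)
    refine squeeze_zero_norm ?_ (h1.mono_left Nat.hyperfilter_le_atTop)
    intro N
    rw [norm_smul, norm_inv, Real.norm_natCast]
    gcongr
    refine (norm_sub_le _ _).trans ?_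
    linarith [hB N, hB 0]
  have h2 := Tendsto.add h h0
  rw [add_zero] at h2
  refine h2.congr ?_
  intro N
  rw [← smul_add]
  congr 1
  have := Finset.sum_range_succ a N
  rw [Finset.sum_range_succ'] at this
  rw [← add_sub_assoc, ← this]; abel

theorem shift {a : ℕ → E} {l : E} (h : HasMean a l) {B : ℝ} (hB : ∀ n, ‖a n‖ ≤ B) (k : ℕ) :
    HasMean (fun n => a (n + k)) l := by
  induction k with
  | zero => simpa using h
  | succ k ih =>
    have := ih.shift_one (fun n => hB (n + k))
    have e : ∀ n, n + (k + 1) = n + 1 + k := fun n => by omega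
    simpa only [e] using this

end HasMean

open ComplexConjugate in
theorem vdc {u : ℕ → ℂ} (hu : ∀ n, ‖u n‖ = 1)
    (h : ∀ k, 1 ≤ k → HasMean (fun n => u (n + k) * conj (u n)) 0) : HasMean u 0 := by
  obtain ⟨L, hL⟩ := HasMean.exists_of_bdd (fun n => (hu n).le)
  suffices L = 0 by rwa [this] at hL
  have hLk : ∀ k, HasMean (fun n => u (n + k)) L := fun k => hL.shift (fun n => (hu n).le) k
  have huu : ∀ j k : ℕ, HasMean (fun n => u (n + j) * conj (u (n + k)))
      (if j = k then 1 else 0) := by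
    have key : ∀ j k : ℕ, k < j → HasMean (fun n => u (n + j) * conj (u (n + k))) 0 := by
      intro j k hjk
      have h1 := (h (j - k) (by omega)).shift (B := 1) (fun n => by simp [hu]) k
      have : ∀ n, n + k + (j - k) = n + j := fun n => by omega
      simpa [this] using h1
    intro j k
    rcases lt_trichotomy j k with hlt | rfl | hlt
    · rw [if_neg hlt.ne]
      have := (key k j hlt).map Complex.conjCLE.toContinuousLinearMap
      simpa [mul_comm] using this
    · simp only [if_true]
      have : ∀ n, u (n + j) * conj (u (n + j)) = 1 := by
        intro n; rw [Complex.mul_conj, Complex.normSq_eq_norm_sq, hu]; simp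
      simpa [this] using HasMean.const (1 : ℂ)
    · rw [if_neg hlt.ne']; exact key j k hlt
  have hterm : ∀ j k : ℕ, HasMean (fun n => (u (n + j) - L) * conj (u (n + k) - L))
      ((if j = k then 1 else 0) - L * conj L) := by
    intro j k
    have h1 := (hLk j).map ((ContinuousLinearMap.mul ℝ ℂ).flip (conj L))
    have h2 := ((hLk k).map Complex.conjCLE.toContinuousLinearMap).map
      (ContinuousLinearMap.mul ℝ ℂ L)
    have h3 := (((huu j k).sub h1).sub h2).add (HasMean.const (L * conj L))
    convert h3 using 1
    · funext n; simp; ring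
    · simp [mul_comm]
  have hH : ∀ H : ℕ, 0 ≤ (H : ℝ) - (H : ℝ) ^ 2 * ‖L‖ ^ 2 := by
    intro H
    have h1 := HasMean.sum (Finset.range H) (fun j _ =>
      HasMean.sum (Finset.range H) (fun k _ => hterm j k))
    have h2 := h1.map Complex.reCLM
    refine ((HasMean.const (0 : ℝ)).le h2 ?_).trans_eq ?_
    · intro n
      have : ∑ j ∈ Finset.range H, ∑ k ∈ Finset.range H,
          (u (n + j) - L) * conj (u (n + k) - L) =
          (∑ j ∈ Finset.range H, (u (n + j) - L)) *
          conj (∑ j ∈ Finset.range H, (u (n + j) - L)) := by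
        rw [map_sum, Finset.sum_mul_sum]
      rw [this, Complex.mul_conj, Complex.reCLM_apply, Complex.ofReal_re]
      exact Complex.normSq_nonneg _
    · simp only [Complex.mul_conj, Complex.reCLM_apply, Complex.normSq_eq_norm_sq]
      simp only [Finset.sum_sub_distrib, Finset.sum_ite_eq, Finset.sum_const, Finset.card_range]
      rw [Finset.sum_ite_mem]
      simp [-Complex.ofReal_pow]
      ring
  by_contra hne
  have hpos : 0 < ‖L‖ ^ 2 := by positivity
  obtain ⟨H, hHb⟩ := exists_nat_gt (1 / ‖L‖ ^ 2)
  have h1 := hH H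
  rw [div_lt_iff₀ hpos] at hHb
  have hHp : (0:ℝ) < H := by
    by_contra h0
    nlinarith [Nat.cast_nonneg (α := ℝ) H]
  nlinarith

theorem integral_fourier_ne_zero {k : ℤ} (hk : k ≠ 0) :
    ∫ x : UnitAddCircle, (fourier k x : ℂ) ∂AddCircle.haarAddCircle = 0 := by
  refine MeasureTheory.integral_eq_zero_of_add_right_eq_neg (g := ((1 / 2 / k : ℝ) : UnitAddCircle))
    ?_
  intro x
  exact fourier_add_half_inv_index hk one_pos x

theorem dense_of_weyl {v : ℕ → UnitAddCircle}
    (h : ∀ k : ℤ, k ≠ 0 → HasMean (fun n => (fourier k (v n) : ℂ)) 0)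
    (θ : UnitAddCircle) {ε : ℝ} (hε : 0 < ε) : ∃ n, dist (v n) θ < ε := by
  by_contra! hcon
  let μ : MeasureTheory.Measure UnitAddCircle := AddCircle.haarAddCircle
  have hint : ∀ g : C(UnitAddCircle, ℂ), MeasureTheory.Integrable g μ := fun g =>
    g.continuous.integrable_of_hasCompactSupport (HasCompactSupport.of_compactSpace _)
  have hspan : ∀ g ∈ Submodule.span ℂ (Set.range (@fourier (1 : ℝ))),
      HasMean (fun n => g (v n)) (∫ x, g x ∂μ) := by
    intro g hg
    induction hg using Submodule.span_induction with
    | mem g hg =>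
      obtain ⟨k, rfl⟩ := hg
      by_cases hk : k = 0
      · subst hk
        simpa [μ] using HasMean.const (1 : ℂ)
      · rw [integral_fourier_ne_zero hk]
        exact h k hk
    | zero => simpa using HasMean.const (0 : ℂ)
    | add g g' _ _ h1 h2 =>
      have := h1.add h2
      rw [← MeasureTheory.integral_add (hint g) (hint g')] at this
      exact this
    | smul c g _ h1 =>
      have := h1.map (ContinuousLinearMap.mul ℝ ℂ c)
      simp only [ContinuousMap.coe_smul, Pi.smul_apply]
      rw [MeasureTheory.integral_smul]
      exact this
  let b : UnitAddCircle → ℝ := fun x => max 0 (ε - dist x θ)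
  have hbc : Continuous b := by fun_prop
  have hbpos : 0 < ∫ x, b x ∂μ := by
    refine hbc.integral_pos_of_hasCompactSupport_nonneg_nonzero
      (HasCompactSupport.of_compactSpace _) (fun x => le_max_left _ _) (x := θ) ?_
    simp [b, hε.le, hε.ne']
  let f : C(UnitAddCircle, ℂ) := ⟨fun x => (b x : ℂ), by fun_prop⟩
  have hf0 : ∀ n, f (v n) = 0 := by
    intro n
    simp [f, b, hcon n]
  set I := ∫ x, b x ∂μ with hI
  have hfI : ∫ x, f x ∂μ = (I : ℂ) := integral_ofReal
  have hcl : f ∈ (Submodule.span ℂ (Set.range (@fourier (1 : ℝ)))).topologicalClosure := by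
    rw [span_fourier_closure_eq_top]; trivial
  rw [← SetLike.mem_coe, Submodule.topologicalClosure_coe, Metric.mem_closure_iff] at hcl
  obtain ⟨g, hg, hfg⟩ := hcl (I / 3) (by positivity)
  have hd : ∀ x, ‖f x - g x‖ ≤ I / 3 := by
    intro x
    rw [← dist_eq_norm]
    exact (ContinuousMap.dist_apply_le_dist x).trans hfg.le
  have h1 : ‖∫ x, g x ∂μ‖ ≤ I / 3 := by
    refine (hspan g hg).norm_le ?_
    intro n
    have := hd (v n)
    rwa [hf0, zero_sub, norm_neg] at this
  have h2 : ‖∫ x, f x ∂μ - ∫ x, g x ∂μ‖ ≤ I / 3 := by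
    rw [← MeasureTheory.integral_sub (hint f) (hint g)]
    have := MeasureTheory.norm_integral_le_of_norm_le_const (μ := μ)
      (Filter.Eventually.of_forall hd)
    simpa [μ] using this
  have h3 : ‖∫ x, f x ∂μ‖ = I := by
    rw [hfI, Complex.norm_real, Real.norm_of_nonneg hbpos.le]
  have h4 := norm_sub_norm_le (∫ x, f x ∂μ) (∫ x, g x ∂μ)
  linarith

def seqDiff (v : ℕ → UnitAddCircle) : ℕ → UnitAddCircle := fun n => v (n + 1) - v n

theorem seqDiff_iter_sub (k : ℕ) : ∀ v w : ℕ → UnitAddCircle,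
    seqDiff^[k] (fun n => v n - w n) = fun n => seqDiff^[k] v n - seqDiff^[k] w n := by
  induction k with
  | zero => intro v w; rfl
  | succ k ih =>
    intro v w
    simp only [Function.iterate_succ_apply]
    rw [← ih]
    congr 1
    funext n
    simp only [seqDiff]; abel

theorem seqDiff_iter_shift (k h : ℕ) : ∀ v : ℕ → UnitAddCircle,
    seqDiff^[k] (fun n => v (n + h)) = fun n => seqDiff^[k] v (n + h) := by
  induction k with
  | zero => intro v; rfl
  | succ k ih =>
    intro v
    simp only [Function.iterate_succ_apply]
    rw [← ih]
    congr 1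
    funext n
    simp only [seqDiff, add_right_comm]

theorem seqDiff_iter_zsmul (k : ℕ) (z : ℤ) : ∀ v : ℕ → UnitAddCircle,
    seqDiff^[k] (fun n => z • v n) = fun n => z • seqDiff^[k] v n := by
  induction k with
  | zero => intro v; rfl
  | succ k ih =>
    intro v
    simp only [Function.iterate_succ_apply]
    rw [← ih]
    congr 1
    funext n
    simp only [seqDiff, smul_sub]

theorem weyl_toCircle (s : ℕ) : ∀ (v : ℕ → UnitAddCircle) (α : UnitAddCircle),
    (∀ k : ℤ, k ≠ 0 → k • α ≠ 0) → (∀ n, seqDiff^[s + 1] v n = α) →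
    HasMean (fun n => (AddCircle.toCircle (v n) : ℂ)) 0 := by
  induction s with
  | zero =>
    intro v α hα hv
    obtain ⟨L, hL⟩ := HasMean.exists_of_bdd (a := fun n => (AddCircle.toCircle (v n) : ℂ)) (B := 1)
      (fun n => (Circle.norm_coe _).le)
    have h1 := hL.shift_one (B := 1) (fun n => (Circle.norm_coe _).le)
    have h2 := hL.map (ContinuousLinearMap.mul ℝ ℂ (AddCircle.toCircle α : ℂ))
    have h3 : ∀ n, v (n + 1) = α + v n := by
      intro n
      have := hv n
      simp only [zero_add, Function.iterate_one, seqDiff] at this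
      rw [← this]; abel
    simp only [h3, AddCircle.toCircle_add, Circle.coe_mul] at h1
    have h4 := h1.unique h2
    simp only [ContinuousLinearMap.mul_apply'] at h4
    have h5 : (AddCircle.toCircle α : ℂ) ≠ 1 := by
      intro h
      have h6 : AddCircle.toCircle α = AddCircle.toCircle (0 : UnitAddCircle) := by
        rw [AddCircle.toCircle_zero]
        exact Circle.ext (by simpa using h)
      have := AddCircle.injective_toCircle one_ne_zero h6
      exact hα 1 one_ne_zero (by simpa using this)
    have h6 : L = 0 := by
      by_contra h0
      apply h5
      have : (AddCircle.toCircle α : ℂ) * L = 1 * L := by rw [one_mul]; exact h4.symm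
      exact mul_right_cancel₀ h0 this
    rwa [h6] at hL
  | succ s ih =>
    intro v α hα hv
    refine vdc (fun n => Circle.norm_coe _) ?_
    intro k hk
    have hk' : (k : ℤ) ≠ 0 := by omega
    have h1 : ∀ m n, seqDiff^[s + 1] v (n + m) = seqDiff^[s + 1] v n + (m : ℤ) • α := by
      intro m
      induction m with
      | zero => intro n; simp
      | succ m ihm =>
        intro n
        have h2 := hv (n + m)
        rw [Function.iterate_succ_apply'] at h2
        simp only [seqDiff] at h2
        rw [← add_assoc]
        have h3 := ihm n
        rw [sub_eq_iff_eq_add] at h2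
        change seqDiff^[s + 1] v (n + m + 1) = _ at h2
        rw [h2]
        change α + seqDiff^[s + 1] v (n + m) = _
        rw [h3]; push_cast; rw [add_smul, one_smul]; abel
    have := ih (fun n => v (n + k) - v n) ((k : ℤ) • α) (by
      intro j hj
      rw [smul_smul]
      exact hα _ (mul_ne_zero hj hk')) (by
      intro n
      rw [seqDiff_iter_sub (s + 1) (fun n => v (n + k)) v, seqDiff_iter_shift]
      simp only
      rw [h1]; abel)
    convert this using 2 with n
    rw [sub_eq_add_neg, AddCircle.toCircle_add, AddCircle.toCircle_neg, Circle.coe_mul,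
      Circle.coe_inv_eq_conj]

theorem weyl_dense (s : ℕ) (v : ℕ → UnitAddCircle) (α : UnitAddCircle)
    (hα : ∀ k : ℤ, k ≠ 0 → k • α ≠ 0) (hv : ∀ n, seqDiff^[s + 1] v n = α)
    (θ : UnitAddCircle) {ε : ℝ} (hε : 0 < ε) : ∃ n, dist (v n) θ < ε := by
  refine dense_of_weyl ?_ θ hε
  intro k hk
  simp only [fourier_apply]
  refine weyl_toCircle s (fun n => k • v n) (k • α) ?_ ?_
  · intro j hj
    rw [smul_smul]
    exact hα _ (mul_ne_zero hj hk)
  · intro n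
    rw [seqDiff_iter_zsmul]
    simp only [hv]


theorem frob_step {G ι : Type*} [AddCommGroup G] (s : Finset ι) (g : ι → G) (c : G → ℕ)
    (h : ∀ x, ∑ i ∈ s, c (x - g i) = 1) (p : ℕ) (hp : p.Prime) (hlt : s.card < p) :
    ∀ x, ∑ i ∈ s, c (x - p • g i) = 1 := by
  have : Fact p.Prime := ⟨hp⟩
  have hne : s.Nonempty := by
    rw [Finset.nonempty_iff_ne_empty]; rintro rfl
    simpa using h 0
  have hc : ∀ y, c y ≤ 1 := by
    intro y
    obtain ⟨i, hi⟩ := hne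
    have := h (y + g i)
    rw [← this]
    have h2 := Finset.single_le_sum (f := fun i' => c (y + g i - g i'))
      (fun _ _ => Nat.zero_le _) hi
    simpa using h2
  let S : Multiplicative G →* Module.End (ZMod p) (G → ZMod p) :=
    { toFun := fun u =>
        { toFun := fun f x => f (x - u.toAdd)
          map_add' := fun _ _ => rfl
          map_smul' := fun _ _ => rfl }
      map_one' := by ext f x; simp
      map_mul' := by
        intro a b; ext f x
        simp [sub_sub] }
  have hS : ∀ u f x, S u f x = f (x - u.toAdd) := fun _ _ _ => rfl
  let E := AddMonoidAlgebra.lift (ZMod p) (Module.End (ZMod p) (G → ZMod p)) G S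
  have hE : ∀ u, E (AddMonoidAlgebra.single u 1) = S (Multiplicative.ofAdd u) := by
    intro u; simp [E]
  let a : AddMonoidAlgebra (ZMod p) G := ∑ i ∈ s, AddMonoidAlgebra.single (g i) 1
  have hap : a ^ p = ∑ i ∈ s, AddMonoidAlgebra.single (p • g i) 1 := by
    have : CharP (AddMonoidAlgebra (ZMod p) G) p := by
      refine charP_of_injective_algebraMap (R := ZMod p) ?_ p
      exact (algebraMap (ZMod p) _).injective
    simp only [a]
    rw [sum_pow_char]
    simp [AddMonoidAlgebra.single_pow]
  let c' : G → ZMod p := fun x => c x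
  have h1 : E a c' = fun _ => 1 := by
    funext x
    simp only [a, map_sum, hE, LinearMap.sum_apply, Finset.sum_apply, hS, c']
    have := h x
    exact_mod_cast congrArg (Nat.cast : ℕ → ZMod p) this
  have h2 : ∀ t : ZMod p, E a (fun _ => t) = fun _ => (s.card : ZMod p) * t := by
    intro t
    funext x
    simp only [a, map_sum, hE, LinearMap.sum_apply, Finset.sum_apply, hS]
    simp
  have h3 : ∀ k : ℕ, (E a ^ (k+1)) c' = fun _ => (s.card : ZMod p) ^ k := by
    intro k
    induction k with
    | zero => simp [h1]
    | succ k ih =>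
      rw [pow_succ', Module.End.mul_apply, ih, h2]
      funext _; ring
  have hcard : (s.card : ZMod p) ≠ 0 := by
    rw [Ne, ZMod.natCast_eq_zero_iff]
    intro hd
    exact absurd (Nat.le_of_dvd hne.card_pos hd) (by omega)
  intro x
  have h4 : E (a ^ p) c' x = 1 := by
    rw [map_pow]
    obtain ⟨k, rfl⟩ : ∃ k, p = k + 1 := ⟨p - 1, by have := hp.pos; omega⟩
    rw [h3]
    have := ZMod.pow_card_sub_one_eq_one hcard
    simpa using this
  rw [hap] at h4
  simp only [map_sum, hE, LinearMap.sum_apply, Finset.sum_apply, hS, c', toAdd_ofAdd] at h4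
  have h5 : ((∑ i ∈ s, c (x - p • g i) : ℕ) : ZMod p) = ((1 : ℕ) : ZMod p) := by
    push_cast; exact h4
  rw [ZMod.natCast_eq_natCast_iff'] at h5
  have h6 : ∑ i ∈ s, c (x - p • g i) ≤ s.card := by
    calc _ ≤ ∑ i ∈ s, 1 := Finset.sum_le_sum (fun _ _ => hc _)
      _ = _ := by simp
  rwa [Nat.mod_eq_of_lt (by omega), Nat.mod_eq_of_lt hp.one_lt] at h5

theorem dilation {G ι : Type*} [AddCommGroup G] (s : Finset ι) (c : G → ℕ) (r : ℕ) :
    (∀ p : ℕ, p.Prime → p ∣ r → s.card < p) → r ≠ 0 → ∀ g : ι → G,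
    (∀ x, ∑ i ∈ s, c (x - g i) = 1) → ∀ x, ∑ i ∈ s, c (x - r • g i) = 1 := by
  induction r using Nat.recOnMul with
  | zero => intro _ h0; exact absurd rfl h0
  | one => intro _ _ g h; simpa using h
  | prime p hp =>
    intro h1 _ g h
    exact frob_step s g c h p hp (h1 p hp dvd_rfl)
  | mul a b iha ihb =>
    intro h1 h0 g h x
    have hb := ihb (fun p hp hd => h1 p hp (hd.mul_left a)) (right_ne_zero_of_mul h0) g h
    have ha := iha (fun p hp hd => h1 p hp (hd.mul_right b)) (left_ne_zero_of_mul h0) _ hb x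
    simpa [mul_smul] using ha

theorem dilation' {G : Type*} [AddCommGroup G] (F : Finset G) (c : G → ℕ)
    (h : ∀ x, ∑ f ∈ F, c (x - f) = 1) (k : ℕ) (x : G) :
    ∑ f ∈ F, c (x - (1 + F.card.factorial * k) • f) = 1 := by
  refine dilation F c _ ?_ ?_ (fun f => f) h x
  · intro p hp hd
    by_contra hle
    have h1 : p ∣ F.card.factorial := (Nat.Prime.dvd_factorial hp).2 (by omega)
    have h2 : p ∣ 1 := (Nat.dvd_add_left (h1.mul_right k)).1 hd
    exact hp.one_lt.ne' (Nat.dvd_one.1 h2)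
  · omega


def det2 (h k : ℤ × ℤ) : ℤ := h.1 * k.2 - h.2 * k.1

theorem per_zsmul {α : Type*} {f : ℤ × ℤ → α} {h : ℤ × ℤ} (hf : ∀ x, f (x + h) = f x)
    (n : ℤ) : ∀ x, f (x + n • h) = f x := by
  induction n using Int.induction_on with
  | zero => simp
  | succ n ih =>
    intro x
    rw [add_smul, one_smul, ← add_assoc, hf, ih]
  | pred n ih =>
    intro x
    rw [← hf, sub_smul, one_smul, add_assoc, sub_add_cancel, ih]

theorem cramer (h k v : ℤ × ℤ) : det2 h k • v = det2 v k • h + det2 h v • k := by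
  ext <;> simp [det2] <;> ring

theorem per_lattice {α : Type*} {f : ℤ × ℤ → α} {h k : ℤ × ℤ} (hf : ∀ x, f (x + h) = f x)
    (hk : ∀ x, f (x + k) = f x) {M : ℤ} (hM : det2 h k ∣ M) (v x : ℤ × ℤ) :
    f (x + M • v) = f x := by
  obtain ⟨m, rfl⟩ := hM
  rw [mul_comm, mul_smul, cramer, smul_add, ← add_assoc, smul_smul, smul_smul,
    per_zsmul hk, per_zsmul hf]

def DD (h : ℤ × ℤ) : AddMonoid.End (ℤ × ℤ → UnitAddCircle) where
  toFun f x := f (x + h) - f x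
  map_zero' := by funext x; simp
  map_add' f g := by funext x; simp only [Pi.add_apply]; abel

theorem DD_apply (h : ℤ × ℤ) (f : ℤ × ℤ → UnitAddCircle) (x : ℤ × ℤ) :
    DD h f x = f (x + h) - f x := rfl

theorem End_mul_apply (A B : AddMonoid.End (ℤ × ℤ → UnitAddCircle))
    (f : ℤ × ℤ → UnitAddCircle) : (A * B) f = A (B f) := rfl

theorem DD_comm (h k : ℤ × ℤ) : Commute (DD h) (DD k) := by
  ext f x
  simp only [End_mul_apply, DD_apply, add_right_comm]
  abel

theorem DD_eq_zero {h : ℤ × ℤ} {f : ℤ × ℤ → UnitAddCircle} :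
    DD h f = 0 ↔ ∀ x, f (x + h) = f x := by
  rw [funext_iff]
  simp only [DD_apply, Pi.zero_apply, sub_eq_zero]

theorem comm_apply {A B : AddMonoid.End (ℤ × ℤ → UnitAddCircle)} (h : Commute A B)
    (f : ℤ × ℤ → UnitAddCircle) : A (B f) = B (A f) := by
  have := DFunLike.congr_fun h.eq f
  simpa using this

theorem DDprod_comm (h : ℤ × ℤ) (L : List (ℤ × ℤ)) : Commute (DD h) (L.map DD).prod := by
  apply Commute.list_prod_right
  intro y hy
  obtain ⟨k, -, rfl⟩ := List.mem_map.1 hy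
  exact DD_comm h k

theorem DDprod_kill {h : ℤ × ℤ} {L : List (ℤ × ℤ)} (hL : h ∈ L) {f : ℤ × ℤ → UnitAddCircle}
    (hf : ∀ x, f (x + h) = f x) : (L.map DD).prod f = 0 := by
  induction L with
  | nil => simp at hL
  | cons a L ih =>
    rw [List.map_cons, List.prod_cons, End_mul_apply]
    rcases List.mem_cons.1 hL with rfl | h1
    · rw [comm_apply (DDprod_comm h L), DD_eq_zero.2 hf, map_zero]
    · rw [ih h1, map_zero]

theorem poly_of_prod {h v : ℤ × ℤ} {M : ℤ} (L : List (ℤ × ℤ)) :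
    ∀ (f : ℤ × ℤ → UnitAddCircle), (∀ x, f (x + h) = f x) → (L.map DD).prod f = 0 →
    (∀ k ∈ L, det2 h k ∣ M) → (DD (M • v) ^ L.length) f = 0 := by
  induction L with
  | nil => intro f _ h0 _; simpa using h0
  | cons a L ih =>
    intro f hf h0 hM
    rw [List.map_cons, List.prod_cons, End_mul_apply,
      comm_apply (DDprod_comm a L)] at h0
    have h1 := ih (DD a f) (by
      rw [← DD_eq_zero, comm_apply (DD_comm h a), DD_eq_zero.2 hf, map_zero]) h0
      (fun k hk => hM k (by simp [hk]))
    rw [← comm_apply ((DD_comm a (M • v)).pow_right _), DD_eq_zero] at h1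
    have h2 : DD h ((DD (M • v) ^ L.length) f) = 0 := by
      rw [comm_apply ((DD_comm h (M • v)).pow_right _), DD_eq_zero.2 hf, map_zero]
    rw [DD_eq_zero] at h2
    rw [List.length_cons, pow_succ', End_mul_apply, DD_eq_zero]
    intro x
    exact per_lattice h2 h1 (hM a (by simp)) v x

theorem iter_scale (N : ℕ) (w : ℤ × ℤ) (s : ℕ) : ∀ f : ℤ × ℤ → UnitAddCircle,
    (DD w ^ (s + 1)) f = 0 → (DD (N • w) ^ s) f = (N ^ s) • (DD w ^ s) f := by
  induction s with
  | zero => intro f _; simp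
  | succ s ih =>
    intro f hf
    have h1 := ih (DD w f) (by rw [← End_mul_apply, ← pow_succ]; exact hf)
    rw [← comm_apply ((DD_comm w (N • w)).pow_right _), ← End_mul_apply (DD w ^ s),
      ← pow_succ] at h1
    set χ := (DD (N • w) ^ s) f
    rw [pow_succ' (DD (N • w)), End_mul_apply]
    set β := (DD w ^ (s + 1)) f with hβ
    have hβp : ∀ x, β (x + w) = β x := by
      rw [← DD_eq_zero, hβ, ← End_mul_apply, ← pow_succ']; exact hf
    have key : ∀ n : ℕ, ∀ x, χ (x + n • w) = χ x + n • (N ^ s • β x) := by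
      intro n
      induction n with
      | zero => simp
      | succ n ihn =>
        intro x
        have h2 := congrFun h1 (x + n • w)
        rw [DD_apply, sub_eq_iff_eq_add] at h2
        rw [succ_nsmul, ← add_assoc, h2, ihn, Pi.smul_apply]
        have h3 := per_zsmul hβp n x
        rw [natCast_zsmul] at h3
        rw [h3, succ_nsmul]; abel
    funext x
    rw [DD_apply]
    change χ (x + N • w) - χ x = _
    rw [key, Pi.smul_apply, smul_smul, pow_succ']
    abel

theorem seqDiff_DD (w x : ℤ × ℤ) (s : ℕ) : ∀ f : ℤ × ℤ → UnitAddCircle,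
    seqDiff^[s] (fun n => f (x + n • w)) = fun n : ℕ => (DD w ^ s) f (x + n • w) := by
  induction s with
  | zero => intro f; rfl
  | succ s ih =>
    intro f
    rw [Function.iterate_succ_apply, pow_succ]
    simp only [End_mul_apply]
    rw [← ih (DD w f)]
    congr 1
    funext n
    simp only [seqDiff, DD_apply, succ_nsmul, add_assoc]

theorem torsion_uniform {f : ℤ × ℤ → UnitAddCircle} {D : ℤ} (hD : D ≠ 0)
    (hf : ∀ v x, f (x + D • v) = f x) (ht : ∀ x, ∃ k : ℤ, k ≠ 0 ∧ k • f x = 0) :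
    ∃ N : ℕ, N ≠ 0 ∧ ∀ x, N • f x = 0 := by
  choose k hk0 hk using ht
  let S : Finset (ℤ × ℤ) := Finset.Ico 0 |D| ×ˢ Finset.Ico 0 |D|
  refine ⟨∏ y ∈ S, (k y).natAbs, ?_, ?_⟩
  · rw [Finset.prod_ne_zero_iff]
    intro y _
    exact Int.natAbs_ne_zero.2 (hk0 y)
  · intro x
    let y : ℤ × ℤ := (x.1 % D, x.2 % D)
    have hy : y ∈ S := by
      simp only [S, y, Finset.mem_product, Finset.mem_Ico]
      exact ⟨⟨Int.emod_nonneg _ hD, Int.emod_lt_abs _ hD⟩,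
        ⟨Int.emod_nonneg _ hD, Int.emod_lt_abs _ hD⟩⟩
    have hxy : x = y + D • ((x.1 / D, x.2 / D) : ℤ × ℤ) := by
      ext <;> simp [y, Int.emod_add_mul_ediv]
    have h1 : f x = f y := by
      conv_lhs => rw [hxy]
      exact hf _ _
    rw [h1]
    obtain ⟨m, hm⟩ := Finset.dvd_prod_of_mem (fun y => (k y).natAbs) hy
    rw [hm, mul_comm, mul_smul]
    have h2 : (k y).natAbs • f y = 0 := by
      rcases Int.natAbs_eq (k y) with h | h
      · have := hk y; rw [h, natCast_zsmul] at this; exact this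
      · have := hk y; rw [h, neg_smul, natCast_zsmul, neg_eq_zero] at this; exact this
    simp only [h2, smul_zero]

theorem periodic_of_not_dense {f : ℤ × ℤ → UnitAddCircle} {h v : ℤ × ℤ}
    (hf : ∀ x, f (x + h) = f x) (hv : det2 h v ≠ 0) {M₀ : ℤ}
    (hnd : ∀ x, ∀ M : ℤ, M ≠ 0 → M₀ ∣ M →
      ¬ ∀ θ, ∀ ε : ℝ, 0 < ε → ∃ n : ℕ, dist (f (x + n • M • v)) θ < ε) (s : ℕ) :
    ∀ M : ℤ, M ≠ 0 → M₀ ∣ M → (DD (M • v) ^ (s + 1)) f = 0 →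
    ∃ N : ℤ, N ≠ 0 ∧ ∀ x, f (x + N • v) = f x := by
  induction s with
  | zero =>
    intro M hM _ h0
    rw [zero_add, pow_one, DD_eq_zero] at h0
    exact ⟨M, hM, h0⟩
  | succ s ih =>
    intro M hM hdvd h0
    set α := (DD (M • v) ^ (s + 1)) f with hα
    have hα1 : ∀ x, α (x + M • v) = α x := by
      rw [← DD_eq_zero, hα, ← End_mul_apply, ← pow_succ']; exact h0
    have hα2 : ∀ x, α (x + h) = α x := by
      rw [← DD_eq_zero, hα, comm_apply ((DD_comm h (M • v)).pow_right _), DD_eq_zero.2 hf,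
        map_zero]
    have hD : det2 h (M • v) ≠ 0 := by
      have : det2 h (M • v) = M * det2 h v := by simp [det2]; ring
      rw [this]; exact mul_ne_zero hM hv
    obtain ⟨N, hN, hNα⟩ := torsion_uniform (f := α) hD
      (fun v x => per_lattice hα2 hα1 dvd_rfl v x) (by
        intro x
        by_contra! hcon
        refine hnd x M hM hdvd ?_
        intro θ ε hε
        refine weyl_dense s (fun n : ℕ => f (x + n • M • v)) (α x) hcon ?_ θ hε
        intro n
        rw [seqDiff_DD]
        have := per_zsmul hα1 n x
        rwa [natCast_zsmul] at this)
    have hz : (N : ℤ) ≠ 0 := by exact_mod_cast hN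
    refine ih (N * M) (mul_ne_zero hz hM) (hdvd.mul_left _) ?_
    rw [mul_smul, natCast_zsmul, iter_scale N _ (s + 1) f h0, ← hα]
    funext x
    rw [pow_succ, mul_smul]
    simp only [Pi.smul_apply, hNα, smul_zero, Pi.zero_apply]


theorem sq_pos2 {h : ℤ × ℤ} (hne : h ≠ 0) : 0 < h.1 * h.1 + h.2 * h.2 := by
  by_contra hle
  apply hne
  have h1 : h.1 * h.1 = 0 := by linarith [mul_self_nonneg h.1, mul_self_nonneg h.2]
  have h2 : h.2 * h.2 = 0 := by linarith [mul_self_nonneg h.1, mul_self_nonneg h.2]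
  exact Prod.ext (mul_self_eq_zero.1 h1) (mul_self_eq_zero.1 h2)

theorem circle_near {a θ ε : ℝ} (h : dist (a : UnitAddCircle) (θ : UnitAddCircle) < ε) :
    ∃ z : ℤ, |a - θ - z| < ε := by
  rw [dist_eq_norm, ← AddCircle.coe_sub, UnitAddCircle.norm_eq] at h
  exact ⟨_, h⟩

theorem circle_inj {a b : ℝ} (ha : 0 ≤ a) (ha' : a < 1) (hb : 0 ≤ b) (hb' : b < 1)
    (h : (a : UnitAddCircle) = b) : a = b := by
  have := (AddCircle.coe_eq_coe_iff_of_mem_Ico (p := (1 : ℝ)) (a := 0) (x := a) (y := b)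
    ⟨ha, by simpa using ha'⟩ ⟨hb, by simpa using hb'⟩).1 h
  exact this

theorem excl {α : Type*} [AddCommMonoid α] [LE α] [One α] {f g : ℤ × ℤ → α} {h k : ℤ × ℤ}
    (hf : ∀ x, f (x + h) = f x) (hg : ∀ x, g (x + k) = g x) (hle : ∀ x, f x + g x ≤ 1)
    {M : ℤ} (hM : det2 h k ∣ M) (x v : ℤ × ℤ) : f x + g (x + M • v) ≤ 1 := by
  obtain ⟨m, rfl⟩ := hM
  rw [mul_comm, mul_smul, cramer, smul_add, ← add_assoc, smul_smul, smul_smul,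
    per_zsmul hg, ← per_zsmul hf (m * det2 v k) x]
  exact hle _

theorem weak_core (P : Finset (ℤ × ℤ)) (φ : ℤ × ℤ → ℤ × ℤ → ℝ) (c : ℤ × ℤ → ℕ)
    (hP0 : ∀ h ∈ P, h ≠ 0) (hdet : ∀ h ∈ P, ∀ k ∈ P, h ≠ k → det2 h k ≠ 0)
    (hφ0 : ∀ h ∈ P, ∀ x, 0 ≤ φ h x) (hper : ∀ h ∈ P, ∀ x, φ h (x + h) = φ h x)
    (hsum : ∀ x, (c x : ℝ) + ∑ h ∈ P, φ h x = 1) :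
    ∃ N : ℤ, N ≠ 0 ∧ (∀ h ∈ P, ∀ k ∈ P, h ≠ k → det2 h k ∣ N) ∧
      ∀ x, (∃ h ∈ P, ∀ v, c (x + N • v + N • h) = c (x + N • v)) ∨
        (∀ v, c (x + N • v) = c x) := by
  classical
  let M₀ : ℤ := ∏ h ∈ P, ∏ k ∈ P.erase h, det2 h k
  have hM₀ : M₀ ≠ 0 := by
    simp only [M₀]
    rw [Finset.prod_ne_zero_iff]
    intro h hh
    rw [Finset.prod_ne_zero_iff]
    intro k hk
    rw [Finset.mem_erase] at hk
    exact hdet h hh k hk.2 hk.1.symm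
  have hM₀d : ∀ h ∈ P, ∀ k ∈ P, h ≠ k → det2 h k ∣ M₀ := by
    intro h hh k hk hne
    refine dvd_trans ?_ (Finset.dvd_prod_of_mem _ hh)
    exact Finset.dvd_prod_of_mem (fun k => det2 h k) (Finset.mem_erase.2 ⟨hne.symm, hk⟩)
  have hsplit : ∀ h ∈ P, ∀ x, (c x : ℝ) + (φ h x + ∑ k ∈ P.erase h, φ k x) = 1 := by
    intro h hh x
    rw [Finset.add_sum_erase P (fun k => φ k x) hh]; exact hsum x
  have hs0 : ∀ h x, 0 ≤ ∑ k ∈ P.erase h, φ k x := fun h x =>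
    Finset.sum_nonneg fun k hk => hφ0 k (Finset.mem_of_mem_erase hk) x
  have hpair : ∀ h ∈ P, ∀ k ∈ P, h ≠ k → ∀ x, φ h x + φ k x ≤ 1 := by
    intro h hh k hk hne x
    have h1 := Finset.single_le_sum (f := fun k => φ k x) (s := P.erase h)
      (fun k hk => hφ0 k (Finset.mem_of_mem_erase hk) x) (Finset.mem_erase.2 ⟨hne.symm, hk⟩)
    have h2 := hsplit h hh x
    have h3 : (0 : ℝ) ≤ c x := Nat.cast_nonneg _
    linarith
  have hle1 : ∀ h ∈ P, ∀ x, φ h x ≤ 1 := by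
    intro h hh x
    have h2 := hsplit h hh x
    have h3 : (0 : ℝ) ≤ c x := Nat.cast_nonneg _
    linarith [hs0 h x]
  have hexcl : ∀ h ∈ P, ∀ k ∈ P, h ≠ k → ∀ M, M₀ ∣ M → ∀ x v, φ h x + φ k (x + M • v) ≤ 1 := by
    intro h hh k hk hne M hM x v
    exact excl (hper h hh) (hper k hk) (hpair h hh k hk hne)
      ((hM₀d h hh k hk hne).trans hM) x v
  let f : ℤ × ℤ → ℤ × ℤ → UnitAddCircle := fun h x => (φ h x : UnitAddCircle)
  have hfper : ∀ h ∈ P, ∀ x, f h (x + h) = f h x := fun h hh x => by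
    simp only [f, hper h hh x]
  have hfsum : ∑ h ∈ P, f h = 0 := by
    funext x
    rw [Finset.sum_apply]
    have h1 : ∑ h ∈ P, φ h x = ((1 - c x : ℤ) : ℝ) := by
      push_cast; linarith [hsum x]
    have h2 : ∑ h ∈ P, f h x = ((∑ h ∈ P, φ h x : ℝ) : UnitAddCircle) := by
      simp only [f]
      exact (map_sum (QuotientAddGroup.mk' (AddSubgroup.zmultiples (1 : ℝ))) _ _).symm
    rw [h2, h1, Pi.zero_apply, AddCircle.coe_eq_zero_iff]
    exact ⟨1 - c x, by simp⟩
  have hprod : ∀ h ∈ P, ((P.erase h).toList.map DD).prod (f h) = 0 := by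
    intro h hh
    have h1 : f h = - ∑ k ∈ P.erase h, f k := by
      rw [eq_neg_iff_add_eq_zero, Finset.add_sum_erase P f hh]; exact hfsum
    rw [h1, map_neg, map_sum, Finset.sum_eq_zero, neg_zero]
    intro k hk
    exact DDprod_kill (Finset.mem_toList.2 hk) (hfper k (Finset.mem_of_mem_erase hk))
  have hnd : ∀ h ∈ P, ∀ v x : ℤ × ℤ, ∀ M : ℤ, M ≠ 0 → M₀ ∣ M →
      ¬ ∀ θ, ∀ ε : ℝ, 0 < ε → ∃ n : ℕ, dist (f h (x + n • M • v)) θ < ε := by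
    intro h hh v x M hM hdvd hdense
    let δ : ℝ := 1 / (4 * (P.card + 1))
    have hδ0 : 0 < δ := by positivity
    have hδ : (P.card : ℝ) * δ ≤ 1 / 4 := by
      simp only [δ]
      rw [mul_one_div, div_le_div_iff₀ (by positivity) (by positivity)]
      linarith
    have hδ1 : δ ≤ 1 / 4 := by
      simp only [δ]
      rw [div_le_div_iff₀ (by positivity) (by positivity)]
      linarith [Nat.cast_nonneg (α := ℝ) P.card]
    obtain ⟨n1, hn1⟩ := hdense ((1 - δ / 2 : ℝ) : UnitAddCircle) (δ / 2) (by positivity)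
    obtain ⟨z1, hz1⟩ := circle_near hn1
    obtain ⟨n2, hn2⟩ := hdense ((1 / 2 : ℝ) : UnitAddCircle) (1 / 4) (by norm_num)
    obtain ⟨z2, hz2⟩ := circle_near hn2
    set y := x + n1 • M • v with hy
    set z := x + n2 • M • v with hz
    have hy0 := hφ0 h hh y
    have hy1 := hle1 h hh y
    have hzz0 := hφ0 h hh z
    have hzz1 := hle1 h hh z
    rw [abs_lt] at hz1 hz2
    have e1 : z1 = 0 := by
      have a1 : (z1 : ℝ) < 1 := by linarith
      have a2 : (-1 : ℝ) < z1 := by linarith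
      have b1 : z1 < 1 := by exact_mod_cast a1
      have b2 : -1 < z1 := by exact_mod_cast a2
      omega
    have e2 : z2 = 0 := by
      have a1 : (z2 : ℝ) < 1 := by linarith
      have a2 : (-1 : ℝ) < z2 := by linarith
      have b1 : z2 < 1 := by exact_mod_cast a1
      have b2 : -1 < z2 := by exact_mod_cast a2
      omega
    rw [e1] at hz1
    rw [e2] at hz2
    simp only [Int.cast_zero, sub_zero] at hz1 hz2
    have hzy : z = y + M • (((n2 : ℤ) - n1) • v) := by
      rw [hz, hy, smul_comm M, sub_smul, natCast_zsmul, natCast_zsmul]; abel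
    have hk : ∀ k ∈ P.erase h, φ k z ≤ δ := by
      intro k hk
      rw [Finset.mem_erase] at hk
      have := hexcl h hh k hk.2 hk.1.symm M hdvd y (((n2 : ℤ) - n1) • v)
      rw [← hzy] at this
      linarith
    have hks : ∑ k ∈ P.erase h, φ k z ≤ 1 / 4 := by
      refine (Finset.sum_le_sum hk).trans ?_
      rw [Finset.sum_const, nsmul_eq_mul]
      refine le_trans ?_ hδ
      gcongr
      exact Finset.erase_subset _ _
    have hks0 := hs0 h z
    have htot := hsplit h hh z
    rcases Nat.eq_zero_or_pos (c z) with h0 | h0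
    · rw [h0] at htot
      push_cast at htot
      linarith
    · have : (1 : ℝ) ≤ c z := by exact_mod_cast h0
      linarith
  have hfull : ∀ h ∈ P, ∃ D : ℤ, D ≠ 0 ∧ ∀ v x, f h (x + D • v) = f h x := by
    intro h hh
    let v : ℤ × ℤ := (-h.2, h.1)
    have hv : det2 h v ≠ 0 := by
      have := sq_pos2 (hP0 h hh)
      simp only [det2, v]
      linarith
    obtain ⟨N, hN, hNp⟩ := periodic_of_not_dense (hfper h hh) hv (hnd h hh v)
      (P.erase h).toList.length M₀ hM₀ dvd_rfl (by
        rw [pow_succ', End_mul_apply, poly_of_prod _ (f h) (hfper h hh) (hprod h hh), map_zero]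
        intro k hk
        rw [Finset.mem_toList, Finset.mem_erase] at hk
        exact hM₀d h hh k hk.2 hk.1.symm)
    refine ⟨det2 h (N • v), ?_, fun u x => per_lattice (hfper h hh) hNp dvd_rfl u x⟩
    have : det2 h (N • v) = N * det2 h v := by simp [det2]; ring
    rw [this]; exact mul_ne_zero hN hv
  choose! D hD0 hD using hfull
  refine ⟨M₀ * ∏ h ∈ P, D h, mul_ne_zero hM₀ (Finset.prod_ne_zero_iff.2 hD0),
    fun h hh k hk hne => (hM₀d h hh k hk hne).mul_right _, ?_⟩
  set N := M₀ * ∏ h ∈ P, D h with hNdef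
  have hNper : ∀ h ∈ P, ∀ v x, f h (x + N • v) = f h x := by
    intro h hh v x
    obtain ⟨m, hm⟩ : D h ∣ N := (Finset.dvd_prod_of_mem D hh).mul_left _
    rw [hm, mul_smul]
    exact hD h hh _ x
  intro x
  by_cases hex : ∃ h ∈ P, ∃ v, φ h (x + N • v) = 1
  · obtain ⟨h, hh, v, hv⟩ := hex
    left
    refine ⟨h, hh, ?_⟩
    have h0 : ∀ u, ∑ k ∈ P.erase h, φ k (x + N • u) = 0 := by
      intro u
      apply Finset.sum_eq_zero
      intro k hk
      rw [Finset.mem_erase] at hk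
      have h1 := hexcl h hh k hk.2 hk.1.symm N (dvd_mul_right _ _) (x + N • v) (u - v)
      have h2 : x + N • v + N • (u - v) = x + N • u := by rw [smul_sub]; abel
      rw [h2, hv] at h1
      linarith [hφ0 k hk.2 (x + N • u)]
    intro u
    have h1 := hsplit h hh (x + N • u)
    have h2 := hsplit h hh (x + N • (u + h))
    rw [h0] at h1 h2
    have h3 : x + N • (u + h) = x + N • u + N • h := by rw [smul_add]; abel
    rw [h3, per_zsmul (hper h hh)] at h2
    have h4 : (c (x + N • u + N • h) : ℝ) = c (x + N • u) := by linarith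
    exact_mod_cast h4
  · right
    push Not at hex
    have hlt : ∀ h ∈ P, ∀ v, φ h (x + N • v) < 1 := fun h hh v =>
      lt_of_le_of_ne (hle1 h hh _) (hex h hh v)
    intro v
    have h1 := hsum (x + N • v)
    have h2 := hsum x
    have h3 : ∑ h ∈ P, φ h (x + N • v) = ∑ h ∈ P, φ h x := by
      apply Finset.sum_congr rfl
      intro h hh
      have h4 := hlt h hh 0
      rw [smul_zero, add_zero] at h4
      exact circle_inj (hφ0 h hh _) (hlt h hh v) (hφ0 h hh _) h4 (hNper h hh v x)
    have h4 : (c (x + N • v) : ℝ) = c x := by linarith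
    exact_mod_cast h4


noncomputable def repDir (f : ℤ × ℤ) : ℤ × ℤ :=
  Classical.epsilon (fun x => x ≠ 0 ∧ det2 f x = 0)

theorem repDir_spec {f : ℤ × ℤ} (hf : f ≠ 0) : repDir f ≠ 0 ∧ det2 f (repDir f) = 0 :=
  Classical.epsilon_spec (p := fun x => x ≠ 0 ∧ det2 f x = 0)
    ⟨f, hf, by simp only [det2]; ring⟩

theorem det2_symm {a b : ℤ × ℤ} (h : det2 a b = 0) : det2 b a = 0 := by
  simp only [det2] at *; linarith

theorem det2_trans {a b c : ℤ × ℤ} (hb : b ≠ 0) (h1 : det2 a b = 0) (h2 : det2 b c = 0) :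
    det2 a c = 0 := by
  have h := cramer a c b
  rw [h1, h2, zero_smul, zero_smul, add_zero] at h
  exact (smul_eq_zero.1 h).resolve_right hb

theorem repDir_eq {f g : ℤ × ℤ} (hf : f ≠ 0) (hg : g ≠ 0) (h : det2 f g = 0) :
    repDir f = repDir g := by
  have : (fun x : ℤ × ℤ => x ≠ 0 ∧ det2 f x = 0) = (fun x => x ≠ 0 ∧ det2 g x = 0) := by
    funext x
    apply propext
    constructor
    · rintro ⟨h0, h1⟩; exact ⟨h0, det2_trans hf (det2_symm h) h1⟩
    · rintro ⟨h0, h1⟩; exact ⟨h0, det2_trans hg h h1⟩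
  unfold repDir
  rw [this]

theorem par_multiple {f r : ℤ × ℤ} (hf : f ≠ 0) (h : det2 f r = 0) :
    ∃ a b : ℤ, a ≠ 0 ∧ a • r = b • f := by
  simp only [det2] at h
  by_cases h1 : f.1 = 0
  · have h2 : f.2 ≠ 0 := fun h2 => hf (Prod.ext h1 h2)
    refine ⟨f.2, r.2, h2, ?_⟩
    ext
    · simp; linarith
    · simp; ring
  · refine ⟨f.1, r.1, h1, ?_⟩
    ext
    · simp; ring
    · simp; linarith

theorem weak_periodic (F : Finset (ℤ × ℤ)) (hF0 : (0 : ℤ × ℤ) ∈ F) (c : ℤ × ℤ → ℕ)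
    (hc : ∀ x, ∑ f ∈ F, c (x - f) = 1) :
    ∃ (P : Finset (ℤ × ℤ)) (N : ℤ), N ≠ 0 ∧ (∀ h ∈ P, h ≠ 0) ∧
      (∀ h ∈ P, ∀ k ∈ P, h ≠ k → det2 h k ∣ N) ∧
      ∀ x, (∃ h ∈ P, ∀ v, c (x + N • v + N • h) = c (x + N • v)) ∨
        (∀ v, c (x + N • v) = c x) := by
  classical
  have hc1 : ∀ y, c y ≤ 1 := by
    intro y
    have h2 := Finset.single_le_sum (f := fun f => c (y - f)) (s := F)
      (fun _ _ => Nat.zero_le _) hF0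
    rw [hc y] at h2
    simpa using h2
  set q := F.card.factorial with hq
  have hq0 : (q : ℤ) ≠ 0 := by exact_mod_cast F.card.factorial_ne_zero
  have hbd : ∀ f x : ℤ × ℤ, ∀ k : ℕ, ‖(c (x - (1 + q * k) • f) : ℝ)‖ ≤ 1 := by
    intro f x k
    rw [Real.norm_natCast]
    exact_mod_cast hc1 _
  have hex : ∀ f x : ℤ × ℤ, ∃ l : ℝ, HasMean (fun k : ℕ => (c (x - (1 + q * k) • f) : ℝ)) l :=
    fun f x => HasMean.exists_of_bdd (hbd f x)
  choose φf hφf using hex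
  have hφ0 : ∀ f x, 0 ≤ φf f x := fun f x =>
    (HasMean.const (0 : ℝ)).le (hφf f x) (fun _ => Nat.cast_nonneg _)
  have hφper : ∀ f x, φf f (x + (q : ℤ) • f) = φf f x := by
    intro f x
    have h1 := (hφf f (x + (q : ℤ) • f)).shift_one (hbd f _)
    refine h1.unique ?_
    have e : ∀ k : ℕ, x + (q : ℤ) • f - (1 + q * (k + 1)) • f = x - (1 + q * k) • f := by
      intro k
      rw [natCast_zsmul, mul_add, ← add_assoc, add_smul (1 + q * k), mul_one]
      abel
    simp only [e]
    exact hφf f x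
  have hφsum : ∀ x, (c x : ℝ) + ∑ f ∈ F.erase 0, φf f x = 1 := by
    intro x
    have h1 := (HasMean.const (c x : ℝ)).add
      (HasMean.sum (F.erase 0) (fun f _ => hφf f x))
    refine h1.unique ?_
    have h2 : ∀ k : ℕ, (c x : ℝ) + ∑ f ∈ F.erase 0, (c (x - (1 + q * k) • f) : ℝ) = 1 := by
      intro k
      have h3 := dilation' F c hc k x
      rw [← Finset.add_sum_erase F _ hF0, smul_zero, sub_zero] at h3
      exact_mod_cast h3
    simp only [h2]
    exact HasMean.const 1
  have hmul : ∀ f ∈ F.erase 0, ∃ a b : ℤ, a ≠ 0 ∧ a • repDir f = b • f := by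
    intro f hf
    have hf0 := Finset.ne_of_mem_erase hf
    exact par_multiple hf0 (repDir_spec hf0).2
  choose! a b ha hab using hmul
  let L : ℤ := q * ∏ f ∈ F.erase 0, a f
  have hL : L ≠ 0 := mul_ne_zero hq0 (Finset.prod_ne_zero_iff.2 ha)
  let P := (F.erase 0).image (fun f => L • repDir f)
  have hP0 : ∀ h ∈ P, h ≠ 0 := by
    intro h hh
    obtain ⟨f, hf, rfl⟩ := Finset.mem_image.1 hh
    exact smul_ne_zero hL (repDir_spec (Finset.ne_of_mem_erase hf)).1
  have hPdet : ∀ h ∈ P, ∀ k ∈ P, h ≠ k → det2 h k ≠ 0 := by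
    intro h hh k hk hne h0
    obtain ⟨f, hf, rfl⟩ := Finset.mem_image.1 hh
    obtain ⟨g, hg, rfl⟩ := Finset.mem_image.1 hk
    apply hne
    have hf0 := Finset.ne_of_mem_erase hf
    have hg0 := Finset.ne_of_mem_erase hg
    have h1 : det2 (L • repDir f) (L • repDir g) = L * L * det2 (repDir f) (repDir g) := by
      simp [det2]; ring
    rw [h1] at h0
    have h2 := (mul_eq_zero.1 h0).resolve_left (mul_ne_zero hL hL)
    have h3 : det2 f g = 0 :=
      det2_trans (repDir_spec hf0).1 (repDir_spec hf0).2
        (det2_trans (repDir_spec hg0).1 h2 (det2_symm (repDir_spec hg0).2))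
    rw [repDir_eq hf0 hg0 h3]
  let φ : ℤ × ℤ → ℤ × ℤ → ℝ := fun h x =>
    ∑ f ∈ (F.erase 0).filter (fun f => L • repDir f = h), φf f x
  obtain ⟨N, hN, hNd, hNw⟩ := weak_core P φ c hP0 hPdet
    (fun h _ x => Finset.sum_nonneg fun f _ => hφ0 f x)
    (by
      intro h _ x
      simp only [φ]
      apply Finset.sum_congr rfl
      intro f hf
      rw [Finset.mem_filter] at hf
      obtain ⟨hf, rfl⟩ := hf
      obtain ⟨m, hm⟩ := Finset.dvd_prod_of_mem a hf
      have h1 : L • repDir f = (m * b f) • ((q : ℤ) • f) := by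
        simp only [L]
        rw [hm, mul_comm (a f) m, ← mul_assoc, mul_smul, hab f hf, smul_smul, smul_smul]
        congr 1
        ring
      rw [h1]
      exact per_zsmul (hφper f) _ x)
    (by
      intro x
      have : ∑ h ∈ P, φ h x = ∑ f ∈ F.erase 0, φf f x :=
        Finset.sum_fiberwise_of_maps_to
          (fun f hf => Finset.mem_image_of_mem (fun f => L • repDir f) hf) _
      rw [this]
      exact hφsum x)
  exact ⟨P, N, hN, hP0, hNd, hNw⟩


theorem slice_periodic (F : Finset (ℤ × ℤ)) (c e : ℤ × ℤ → ℕ) (hc1 : ∀ x, c x ≤ 1)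
    {H : ℤ × ℤ} (hH : H ≠ 0) (hcH : ∀ x, c (x + H) = c x)
    (he : ∀ x, ∑ f ∈ F, c (x - f) = e x) {M : ℤ} (hM : M ≠ 0)
    (heM : ∀ x v, e (x + M • v) = e x) :
    ∃ (c' : ℤ × ℤ → ℕ) (D : ℤ), D ≠ 0 ∧ (∀ x v, c' (x + D • v) = c' x) ∧
      ∀ x, ∑ f ∈ F, c' (x - f) = e x := by
  let l : ℤ × ℤ →+ ℤ :=
    { toFun := fun x => det2 H x
      map_zero' := by simp [det2]
      map_add' := by intro x y; simp [det2]; ring }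
  have hl : ∀ x, l x = det2 H x := fun _ => rfl
  let S : ℤ := H.1 * H.1 + H.2 * H.2
  have hS : 0 < S := sq_pos2 hH
  let v : ℤ × ℤ := (-H.2, H.1)
  have hlv : l v = S := by simp only [hl, det2, v, S]; ring
  have hlH : l H = 0 := by simp only [hl, det2]; ring
  let m : ℤ × ℤ → ℤ := fun x => H.1 * x.1 + H.2 * x.2
  have hmH : ∀ x, ∀ n : ℤ, m (x + n • H) = m x + n * S := by
    intro x n; simp [m, S]; ring
  obtain ⟨B, hB0, hB⟩ : ∃ B : ℤ, 0 ≤ B ∧ ∀ f ∈ F, |l f| ≤ B := by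
    refine ⟨∑ f ∈ F, |l f|, Finset.sum_nonneg fun _ _ => abs_nonneg _, ?_⟩
    intro f hf
    exact Finset.single_le_sum (f := fun f => |l f|) (fun _ _ => abs_nonneg _) hf
  let w0 : ℤ × ℤ := (M * (M * (2 * B + 1))) • v
  let T : ℤ := l w0
  have hT' : T = M * M * (2 * B + 1) * S := by
    simp only [T, w0, map_zsmul, hlv, smul_eq_mul]; ring
  have hMM : 0 < M * M := mul_self_pos.2 hM
  have hT : 2 * B + 1 ≤ T := by
    rw [hT']
    have : 0 < M * M * S := by positivity
    nlinarith
  have hT0 : 0 < T := by omega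
  let W : Set (ℤ × ℤ) := {x | 0 ≤ l x ∧ l x < T ∧ 0 ≤ m x ∧ m x < S}
  have hWfin : W.Finite := by
    have h1 : ((Set.Ico 0 T) ×ˢ (Set.Ico 0 S)).Finite := (Set.finite_Ico _ _).prod (Set.finite_Ico _ _)
    refine (h1.preimage (f := fun x : ℤ × ℤ => (l x, m x)) ?_).subset ?_
    · intro x _ y _ hxy
      simp only [Prod.mk.injEq, hl, det2, m] at hxy
      obtain ⟨h1, h2⟩ := hxy
      have e1 : S * x.1 = S * y.1 := by simp only [S]; linear_combination H.1 * h2 - H.2 * h1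
      have e2 : S * x.2 = S * y.2 := by simp only [S]; linear_combination H.2 * h2 + H.1 * h1
      exact Prod.ext (mul_left_cancel₀ hS.ne' e1) (mul_left_cancel₀ hS.ne' e2)
    · rintro x ⟨h1, h2, h3, h4⟩
      exact ⟨⟨h1, h2⟩, ⟨h3, h4⟩⟩
  have : Finite W := hWfin
  let st : ℕ → (W → Fin 2) := fun k x => ⟨c (x.1 + (k : ℤ) • w0), by have := hc1 (x.1 + (k : ℤ) • w0); omega⟩
  obtain ⟨i, j, hij, hst⟩ : ∃ i j : ℕ, i < j ∧ st i = st j := by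
    obtain ⟨i, j, hne, hst⟩ := Finite.exists_ne_map_eq_of_infinite st
    rcases lt_or_gt_of_ne hne with h | h
    · exact ⟨i, j, h, hst⟩
    · exact ⟨j, i, h, hst.symm⟩
  have hst' : ∀ x, 0 ≤ l x → l x < T → c (x + (i : ℤ) • w0) = c (x + (j : ℤ) • w0) := by
    intro x h0 h1
    let n : ℤ := -(m x / S)
    have hlx : l (x + n • H) = l x := by rw [map_add, map_zsmul, hlH, smul_zero, add_zero]
    have hmx : m (x + n • H) = m x % S := by
      rw [hmH, Int.emod_def]; simp only [n]; ring
    have hW : x + n • H ∈ W := by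
      refine ⟨by rwa [hlx], by rwa [hlx], ?_, ?_⟩
      · rw [hmx]; exact Int.emod_nonneg _ hS.ne'
      · rw [hmx]; exact Int.emod_lt_of_pos _ hS
    have h2 := congrFun hst ⟨x + n • H, hW⟩
    simp only [st, Fin.mk.injEq] at h2
    rwa [add_right_comm, per_zsmul hcH, add_right_comm, per_zsmul hcH] at h2
  let d : ℤ := (j : ℤ) - i
  have hd : 1 ≤ d := by simp only [d]; omega
  let w : ℤ × ℤ := d • w0
  let K : ℤ := l w
  have hK' : K = d * T := by simp only [K, w, map_zsmul, smul_eq_mul, T]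
  have hKT : T ≤ K := by rw [hK']; nlinarith
  have hK0 : 0 < K := by omega
  let t : ℤ := i * T
  have hw : ∀ y, t ≤ l y → l y < t + T → c (y + w) = c y := by
    intro y h0 h1
    have hly : l (y - (i : ℤ) • w0) = l y - t := by
      rw [map_sub, map_zsmul, smul_eq_mul]
    have h2 := hst' (y - (i : ℤ) • w0) (by rw [hly]; omega) (by rw [hly]; omega)
    rw [sub_add_cancel] at h2
    rw [h2]
    congr 1
    simp only [w, d, sub_smul]; abel
  let c' : ℤ × ℤ → ℕ := fun x => c (x - ((l x - t) / K) • w)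
  have hc'H : ∀ x, c' (x + H) = c' x := by
    intro x
    simp only [c', map_add, hlH, add_zero]
    rw [← hcH (x - _)]
    congr 1; abel
  have hc'w : ∀ x, c' (x + w) = c' x := by
    intro x
    have h1 : (l (x + w) - t) / K = (l x - t) / K + 1 := by
      rw [map_add]
      change (l x + K - t) / K = _
      have : l x + K - t = (l x - t) + 1 * K := by ring
      rw [this, Int.add_mul_ediv_right _ _ hK0.ne']
    simp only [c', h1]
    congr 1
    rw [add_smul, one_smul]; abel
  refine ⟨c', det2 H w, hK0.ne', fun x v => per_lattice hc'H hc'w dvd_rfl v x, ?_⟩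
  have hcc : ∀ y, t ≤ l y → l y < t + K + T → c' y = c y := by
    intro y h0 h1
    by_cases h2 : l y < t + K
    · have : (l y - t) / K = 0 := Int.ediv_eq_zero_of_lt (by omega) (by omega)
      simp only [c', this, zero_smul, sub_zero]
    · have : (l y - t) / K = 1 := by
        rw [Int.ediv_eq_iff_of_pos hK0]
        constructor <;> linarith
      simp only [c', this, one_smul]
      have hly : l (y - w) = l y - K := map_sub _ _ _
      have h3 := hw (y - w) (by rw [hly]; omega) (by rw [hly]; omega)
      rw [sub_add_cancel] at h3
      exact h3.symm
  have hew : ∀ x, e (x + w) = e x := by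
    intro x
    have : w = M • ((d * (M * (2 * B + 1))) • v) := by
      simp only [w, w0, smul_smul]; congr 1; ring
    rw [this]; exact heM _ _
  intro x
  let n : ℤ := -((l x - t - B) / K)
  have h1 : ∀ f, c' (x - f) = c' (x + n • w - f) := by
    intro f
    rw [← per_zsmul hc'w n (x - f)]
    congr 1; abel
  have hlx : l (x + n • w) = t + B + (l x - t - B) % K := by
    rw [map_add, map_zsmul, smul_eq_mul, Int.emod_def]
    change l x + n * K = _
    simp only [n]; ring
  have hmod0 := Int.emod_nonneg (l x - t - B) hK0.ne'
  have hmod1 := Int.emod_lt_of_pos (l x - t - B) hK0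
  rw [← per_zsmul hew n x, ← he]
  apply Finset.sum_congr rfl
  intro f hf
  rw [h1]
  have hf1 := abs_le.1 (hB f hf)
  have hly : l (x + n • w - f) = l (x + n • w) - l f := map_sub _ _ _
  apply hcc
  · rw [hly, hlx]; omega
  · rw [hly, hlx]; omega

theorem glue (F : Finset (ℤ × ℤ)) (hF : F.Nonempty) (c : ℤ × ℤ → ℕ)
    (hc : ∀ x, ∑ f ∈ F, c (x - f) = 1)
    (P : Finset (ℤ × ℤ)) (N : ℤ) (hN : N ≠ 0) (hP0 : ∀ h ∈ P, h ≠ 0)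
    (hPN : ∀ h ∈ P, ∀ k ∈ P, h ≠ k → det2 h k ∣ N)
    (hw : ∀ x, ∃ h ∈ P, ∀ v, c (x + N • v + N • h) = c (x + N • v)) :
    ∃ (c' : ℤ × ℤ → ℕ) (D : ℤ), D ≠ 0 ∧ (∀ x v, c' (x + D • v) = c' x) ∧
      ∀ x, ∑ f ∈ F, c' (x - f) = 1 := by
  classical
  have hc1 : ∀ y, c y ≤ 1 := by
    intro y
    obtain ⟨f, hf⟩ := hF
    have h2 := Finset.single_le_sum (f := fun f' => c (y + f - f')) (s := F)
      (fun _ _ => Nat.zero_le _) hf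
    rw [hc (y + f)] at h2
    simpa using h2
  choose σ₀ hσP hσ₀ using hw
  let rep : ℤ × ℤ → ℤ × ℤ := fun x => (x.1 % N, x.2 % N)
  have hrep : ∀ x v, rep (x + N • v) = rep x := by
    intro x v
    simp [rep]
  have hrepx : ∀ x, ∃ v, x = rep x + N • v := by
    intro x
    refine ⟨(x.1 / N, x.2 / N), ?_⟩
    ext <;> simp [rep, Int.emod_add_mul_ediv]
  let σ : ℤ × ℤ → ℤ × ℤ := fun x => σ₀ (rep x)
  have hσN : ∀ x v, σ (x + N • v) = σ x := fun x v => by simp only [σ, hrep]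
  have hσ : ∀ x, c (x + N • σ x) = c x := by
    intro x
    obtain ⟨v, hv⟩ := hrepx x
    have := hσ₀ (rep x) v
    rw [← hv] at this
    exact this
  let C : ℤ × ℤ → ℤ × ℤ → ℕ := fun h x => if σ x = h then c x else 0
  have hCper : ∀ h x, C h (x + N • h) = C h x := by
    intro h x
    simp only [C, hσN]
    split_ifs with hs
    · rw [← hs]; exact hσ x
    · rfl
  have hC1 : ∀ h x, C h x ≤ 1 := by
    intro h x
    simp only [C]; split_ifs
    · exact hc1 x
    · omega
  have hCsum : ∀ x, ∑ h ∈ P, C h x = c x := by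
    intro x
    simp only [C]
    rw [Finset.sum_ite_eq, if_pos (hσP _)]
  let e : ℤ × ℤ → ℤ × ℤ → ℕ := fun h x => ∑ f ∈ F, C h (x - f)
  have heper : ∀ h x, e h (x + N • h) = e h x := by
    intro h x
    simp only [e]
    apply Finset.sum_congr rfl
    intro f _
    rw [← hCper h (x - f)]
    congr 1; abel
  have hesum : ∀ x, ∑ h ∈ P, e h x = 1 := by
    intro x
    simp only [e]
    rw [Finset.sum_comm]
    simp only [hCsum, hc]
  have hsplit : ∀ h ∈ P, ∀ x, e h x + ∑ k ∈ P.erase h, e k x = 1 := by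
    intro h hh x
    rw [Finset.add_sum_erase P (fun k => e k x) hh]; exact hesum x
  let M : ℤ := N * N * N
  have hM : M ≠ 0 := by simp [M, hN]
  have hexcl : ∀ h ∈ P, ∀ k ∈ P, h ≠ k → ∀ x v, e h x + e k (x + M • v) ≤ 1 := by
    intro h hh k hk hne x v
    refine excl (heper h) (heper k) ?_ ?_ x v
    · intro y
      rw [← hsplit h hh y]
      gcongr
      exact Finset.single_le_sum (f := fun k => e k y) (s := P.erase h)
        (fun _ _ => Nat.zero_le _) (Finset.mem_erase.2 ⟨hne.symm, hk⟩)
    · have : det2 (N • h) (N • k) = N * N * det2 h k := by simp [det2]; ring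
      rw [this]
      exact mul_dvd_mul_left _ (hPN h hh k hk hne)
  have heM1 : ∀ h ∈ P, ∀ x v, e h x ≤ e h (x + M • v) := by
    intro h hh x v
    rcases Nat.eq_zero_or_pos (e h x) with h0 | h0
    · omega
    · have h1 : ∑ k ∈ P.erase h, e k (x + M • v) = 0 := by
        apply Finset.sum_eq_zero
        intro k hk
        rw [Finset.mem_erase] at hk
        have := hexcl h hh k hk.2 hk.1.symm x v
        omega
      have h2 := hsplit h hh (x + M • v)
      have h3 := hsplit h hh x
      omega
  have heM : ∀ h ∈ P, ∀ x v, e h (x + M • v) = e h x := by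
    intro h hh x v
    refine le_antisymm ?_ (heM1 h hh x v)
    have := heM1 h hh (x + M • v) (-v)
    rwa [smul_neg, add_neg_cancel_right] at this
  have hsl : ∀ h ∈ P, ∃ (c' : ℤ × ℤ → ℕ) (D : ℤ), D ≠ 0 ∧ (∀ x v, c' (x + D • v) = c' x) ∧
      ∀ x, ∑ f ∈ F, c' (x - f) = e h x := fun h hh =>
    slice_periodic F (C h) (e h) (hC1 h) (smul_ne_zero hN (hP0 h hh)) (hCper h)
      (fun _ => rfl) hM (heM h hh)
  choose! c' D hD hper hsum using hsl
  refine ⟨fun x => ∑ h ∈ P, c' h x, ∏ h ∈ P, D h, Finset.prod_ne_zero_iff.2 hD, ?_, ?_⟩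
  · intro x v
    apply Finset.sum_congr rfl
    intro h hh
    obtain ⟨m, hm⟩ := Finset.dvd_prod_of_mem D hh
    rw [hm, mul_smul]
    exact hper h hh _ _
  · intro x
    rw [Finset.sum_comm, ← hesum x]
    exact Finset.sum_congr rfl fun h hh => hsum h hh x

theorem periodic_zero_mem (F : Finset (ℤ × ℤ)) (hF0 : 0 ∈ F) (c : ℤ × ℤ → ℕ)
    (hc : ∀ x, ∑ f ∈ F, c (x - f) = 1) :
    ∃ (c' : ℤ × ℤ → ℕ) (D : ℤ), D ≠ 0 ∧ (∀ x v, c' (x + D • v) = c' x) ∧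
      ∀ x, ∑ f ∈ F, c' (x - f) = 1 := by
  obtain ⟨P, N, hN, hP0, hPN, hw⟩ := weak_periodic F hF0 c hc
  rcases P.eq_empty_or_nonempty with rfl | ⟨h0, hh0⟩
  · refine ⟨c, N, hN, fun x v => ?_, hc⟩
    rcases hw x with ⟨h, hh, _⟩ | h
    · simp at hh
    · exact h v
  · refine glue F ⟨0, hF0⟩ c hc P N hN hP0 hPN fun x => ?_
    rcases hw x with h | h
    · exact h
    · refine ⟨h0, hh0, fun v => ?_⟩
      rw [add_assoc, ← smul_add, h, h]

theorem periodic_gen (F : Finset (ℤ × ℤ)) (hF : F.Nonempty) (c : ℤ × ℤ → ℕ)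
    (hc : ∀ x, ∑ f ∈ F, c (x - f) = 1) :
    ∃ (c' : ℤ × ℤ → ℕ) (D : ℤ), D ≠ 0 ∧ (∀ x v, c' (x + D • v) = c' x) ∧
      ∀ x, ∑ f ∈ F, c' (x - f) = 1 := by
  obtain ⟨f0, hf0⟩ := hF
  have hinj : Set.InjOn (fun f : ℤ × ℤ => f - f0) F := fun a _ b _ h => by simpa using h
  obtain ⟨c', D, hD, hp, ht⟩ := periodic_zero_mem (F.image (fun f => f - f0))
    (Finset.mem_image.2 ⟨f0, hf0, sub_self f0⟩) (fun x => c (x - f0)) (fun x => by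
      rw [Finset.sum_image hinj]
      rw [← hc x]
      refine Finset.sum_congr rfl fun f _ => ?_
      congr 1; abel)
  refine ⟨fun x => c' (x + f0), D, hD, fun x v => ?_, fun x => ?_⟩
  · show c' (x + D • v + f0) = c' (x + f0)
    rw [add_right_comm, hp]
  · rw [← ht x, Finset.sum_image hinj]
    refine Finset.sum_congr rfl fun f _ => ?_
    show c' (x - f + f0) = c' (x - (f - f0))
    congr 1; abel


/-- **Periodic tiling theorem for `ℤ²`.** If a finite set `F ⊆ ℤ²` tiles `ℤ²` by
translations, then it also admits a periodic tiling: there are `C' ⊆ ℤ²` and a finite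
index subgroup `Λ' ⊆ ℤ²` with `F ⊕ C' = ℤ²` and `C' + Λ' = C'`. -/
theorem periodic_tiling_Z2 (F C : Set (ℤ × ℤ)) (hF : F.Finite)
    (hFC : TileOplus F C Set.univ) :
    ∃ (C' : Set (ℤ × ℤ)) (Λ' : AddSubgroup (ℤ × ℤ)), Λ'.FiniteIndex ∧
      TileOplus F C' Set.univ ∧ ∀ h ∈ Λ', ∀ x : ℤ × ℤ, x + h ∈ C' ↔ x ∈ C' := by
  classical
  have hc : ∀ x, ∑ f ∈ hF.toFinset, (fun y => if y ∈ C then (1 : ℕ) else 0) (x - f) = 1 := by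
    intro x
    obtain ⟨⟨f, y⟩, ⟨hf, hy, hxy⟩, hu⟩ := hFC.2 x trivial
    simp only at hf hy hxy
    have hxf : x - f = y := by rw [← hxy]; abel
    rw [Finset.sum_eq_single f]
    · simp [hxf, hy]
    · intro g hg hgf
      refine if_neg fun hgC => hgf ?_
      have := hu (g, x - g) ⟨hF.mem_toFinset.1 hg, hgC, by simp⟩
      exact congrArg Prod.fst this
    · intro h
      exact absurd (hF.mem_toFinset.2 hf) h
  have hne : hF.toFinset.Nonempty := by
    rw [Finset.nonempty_iff_ne_empty]
    intro h
    have := hc 0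
    rw [h] at this
    simp at this
  obtain ⟨c', D, hD, hp, ht⟩ := periodic_gen hF.toFinset hne
    (fun y => if y ∈ C then (1 : ℕ) else 0) hc
  have hle : ∀ x, ∀ f ∈ F, c' (x - f) ≤ 1 := by
    intro x f hf
    rw [← ht x]
    exact Finset.single_le_sum (f := fun f => c' (x - f)) (fun _ _ => Nat.zero_le _)
      (hF.mem_toFinset.2 hf)
  haveI : NeZero D.natAbs := ⟨by simpa using hD⟩
  let φ : ℤ × ℤ →+ ZMod D.natAbs × ZMod D.natAbs :=
    AddMonoidHom.prodMap (Int.castAddHom _) (Int.castAddHom _)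
  refine ⟨{x | c' x = 1}, φ.ker, AddSubgroup.finiteIndex_ker φ,
    ⟨fun _ _ _ _ => trivial, fun x _ => ?_⟩, ?_⟩
  · have hex : ∃ f ∈ F, c' (x - f) = 1 := by
      by_contra hcon
      push Not at hcon
      have h0 : ∑ f ∈ hF.toFinset, c' (x - f) = 0 := Finset.sum_eq_zero fun f hf => by
        have h1 := hle x f (hF.mem_toFinset.1 hf)
        have h2 := hcon f (hF.mem_toFinset.1 hf)
        omega
      rw [ht x] at h0
      omega
    obtain ⟨f, hf, hfx⟩ := hex
    refine ⟨(f, x - f), ⟨hf, hfx, by simp⟩, ?_⟩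
    rintro ⟨g, y⟩ ⟨hg, hy, hgy⟩
    simp only at hg hy hgy
    have hyx : y = x - g := by rw [← hgy]; abel
    by_cases hgf : g = f
    · rw [hyx, hgf]
    · exfalso
      have hy' : c' (x - g) = 1 := hyx ▸ hy
      have h2 : ∑ k ∈ ({g, f} : Finset (ℤ × ℤ)), c' (x - k) ≤ ∑ k ∈ hF.toFinset, c' (x - k) := by
        apply Finset.sum_le_sum_of_subset
        intro k hk
        simp only [Finset.mem_insert, Finset.mem_singleton] at hk
        rcases hk with rfl | rfl
        · exact hF.mem_toFinset.2 hg
        · exact hF.mem_toFinset.2 hf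
      rw [Finset.sum_pair hgf, ht x, hy', hfx] at h2
      omega
  · intro h hh x
    have hh' : φ h = 0 := hh
    have h1 : ((h.1 : ℤ) : ZMod D.natAbs) = 0 := congrArg Prod.fst hh'
    have h2 : ((h.2 : ℤ) : ZMod D.natAbs) = 0 := congrArg Prod.snd hh'
    rw [ZMod.intCast_zmod_eq_zero_iff_dvd, Int.natAbs_dvd] at h1 h2
    obtain ⟨a, ha⟩ := h1
    obtain ⟨b, hb⟩ := h2
    have : h = D • ((a, b) : ℤ × ℤ) := by
      ext <;> simp [ha, hb]
    show c' (x + h) = 1 ↔ c' x = 1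
    rw [this, hp]
end

section
/- Let (X, μ) be a probability space equipped with an ergodic measure-preserving action of ℤ², and let A ⊆ X be a measurable set such that for some elements g₁, …, gₙ ∈ ℤ² the sets g₁A, …, gₙA form a partition of X (up to μ-null sets). Then there exists a finite partition (A₁, …, A_m) of A into measurable sets such that each A_i is invariant (up to μ-null sets) under the action of some nonzero element of ℤ². -/
open MeasureTheory


lemma choose_det_ne_zero {D : ℕ} (v : Fin D → ℕ) (hv : Function.Injective v) :
    (Matrix.of fun i j : Fin D => (Nat.choose (v i) j : ℤ)).det ≠ 0 := by
  intro h0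
  have h := Matrix.det_eval_matrixOfPolynomials_eq_det_vandermonde (fun i ↦ (v i : ℤ))
      (fun i => descPochhammer ℤ i)
      (fun i => descPochhammer_natDegree ℤ i)
      (fun i => monic_descPochhammer ℤ i)
  have h1 : (Matrix.of fun i j : Fin D => (descPochhammer ℤ j).eval (v i : ℤ)) =
      Matrix.of fun i j : Fin D => ((Nat.factorial (j : ℕ)) : ℤ) *
        (Matrix.of fun i j : Fin D => (Nat.choose (v i) j : ℤ)) i j := by
    ext i j
    simp only [Matrix.of_apply]
    rw [descPochhammer_eval_eq_descFactorial ℤ _ _, Nat.descFactorial_eq_factorial_mul_choose]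
    push_cast; rfl
  rw [h1, Matrix.det_mul_row, h0, mul_zero] at h
  refine (Matrix.det_vandermonde_ne_zero_iff.mpr ?_) h
  intro a b hab
  exact hv (by simpa using hab)

lemma poly_torsion {G : Type*} [AddCommGroup G] (D : ℕ) (q : ℕ → G)
    (hq : (fwdDiff (1))^[D] q = 0) (hz : ∀ N, ∃ n ≥ N, q n = 0) :
    ∃ k : ℕ, 0 < k ∧ ∀ n, k • q n = 0 := by
  have hiter : ∀ j, D ≤ j → ((fwdDiff (1))^[j] q) = 0 := by
    intro j hj
    induction j, hj using Nat.le_induction with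
    | base => exact hq
    | succ j hj ih =>
      rw [Function.iterate_succ_apply', ih]
      ext n; simp [fwdDiff]
  set a : ℕ → G := fun j => ((fwdDiff (1))^[j] q) 0 with ha
  have hexp : ∀ n, q n = ∑ j : Fin D, (n.choose j : ℤ) • a j := by
    intro n
    have := shift_eq_sum_fwdDiff_iter 1 q n 0
    simp only [zero_add, smul_eq_mul, mul_one] at this
    rw [this, Fin.sum_univ_eq_sum_range (fun j => (n.choose j : ℤ) • a j) D]
    rcases le_total D (n+1) with h | h
    · rw [← Finset.sum_subset (Finset.range_subset_range.2 h)]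
      · simp [ha]
      · intro x _ hx
        rw [hiter x (by simpa using hx)]; simp
    · rw [← Finset.sum_subset (Finset.range_subset_range.2 h) (f := fun j => (n.choose j : ℤ) • a j)]
      · simp [ha]
      · intro x _ hx
        rw [Nat.choose_eq_zero_of_lt (by simpa using hx)]; simp
  have hinf : {n | q n = 0}.Infinite := by
    rw [Set.infinite_iff_exists_gt]
    intro N; obtain ⟨n, hn, h⟩ := hz (N+1); exact ⟨n, h, by omega⟩
  obtain ⟨v, hv⟩ : ∃ v : Fin D → ℕ, Function.Injective v ∧ ∀ i, q (v i) = 0 := by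
    let e := hinf.natEmbedding
    refine ⟨fun i => (e i).1, ?_, fun i => (e i).2⟩
    intro i j hij
    have := e.injective (Subtype.ext hij)
    exact Fin.ext this
  set M : Matrix (Fin D) (Fin D) ℤ := Matrix.of fun i j : Fin D => (Nat.choose (v i) j : ℤ) with hM
  have hdet := choose_det_ne_zero v hv.1
  have hkill : ∀ i : Fin D, M.det • a i = 0 := by
    intro i
    have h1 : ∑ j, M.adjugate i j • (∑ l, M j l • a l) = 0 := by
      refine Finset.sum_eq_zero fun j _ => ?_
      have : (∑ l : Fin D, M j l • a l) = q (v j) := by rw [hexp]; rfl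
      rw [this, hv.2, smul_zero]
    have h2 : ∑ j, M.adjugate i j • (∑ l : Fin D, M j l • a l)
        = ∑ l : Fin D, (M.adjugate * M) i l • a l := by
      simp only [Finset.smul_sum, Matrix.mul_apply, Finset.sum_smul, smul_smul]
      rw [Finset.sum_comm]
    rw [h2, Matrix.adjugate_mul] at h1
    simpa [Matrix.smul_apply, Matrix.one_apply] using h1
  refine ⟨M.det.natAbs, Int.natAbs_pos.2 hdet, fun n => ?_⟩
  rw [hexp, ← natCast_zsmul, Finset.smul_sum]
  refine Finset.sum_eq_zero fun j _ => ?_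
  rw [smul_comm]
  rcases Int.natAbs_eq M.det with h | h
  · rw [← h, hkill, smul_zero]
  · rw [← neg_eq_iff_eq_neg] at h
    rw [← h, neg_smul, hkill, neg_zero, smul_zero]

lemma poly_period {G : Type*} [AddCommGroup G] (k : ℕ) (D : ℕ) : ∀ (q : ℕ → G)
    (hq : (fwdDiff (1))^[D] q = 0) (hk : ∀ n, k • q n = 0) (n : ℕ), q (n + k ^ D) = q n := by
  induction D with
  | zero =>
    intro q hq hk n
    simp only [Function.iterate_zero, id] at hq
    rw [hq]; rfl
  | succ D ih =>
    intro q hq hk n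
    rw [Function.iterate_succ_apply] at hq
    have hr := ih (fwdDiff 1 q) hq (by intro n; simp [fwdDiff, smul_sub, hk])
    set P := k ^ D
    have hstep : ∀ n, q (n + 1 + P) - q (n + 1) = q (n + P) - q n := by
      intro n
      have := hr n
      simp only [fwdDiff] at this
      rw [show n + 1 + P = n + P + 1 by ring, sub_eq_sub_iff_add_eq_add]
      rw [sub_eq_sub_iff_add_eq_add] at this
      rw [this]; abel
    have hconst : ∀ n, q (n + P) - q n = q (0 + P) - q 0 := by
      intro n
      induction n with
      | zero => rfl
      | succ n ihn => rw [hstep, ihn]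
    have hs : ∀ s : ℕ, q (n + s * P) = q n + s • (q (0 + P) - q 0) := by
      intro s
      induction s with
      | zero => simp
      | succ s ihs =>
        rw [succ_nsmul, ← add_assoc, ← ihs, ← hconst (n + s * P), add_mul, one_mul, ← add_assoc]
        abel
    rw [pow_succ, mul_comm, hs k, smul_sub, hk, hk]; simp

lemma seq_diff {M G : Type*} [AddCommGroup M] [AddCommGroup G] (P : M → G) (x w : M) (D : ℕ) :
    ∀ n : ℕ, ((fwdDiff (1))^[D] (fun n : ℕ => P (x + n • w))) n = ((fwdDiff (w))^[D] P) (x + n • w) := by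
  induction D with
  | zero => intro n; rfl
  | succ D ih =>
    intro n
    rw [Function.iterate_succ_apply', Function.iterate_succ_apply']
    simp only [fwdDiff, ih]
    rw [add_smul, one_smul, add_assoc]

/-- determinant -/
def dt (a b : ℤ × ℤ) : ℤ := a.1 * b.2 - a.2 * b.1

lemma dt_span (a b v : ℤ × ℤ) (K : ℤ) (hK : dt a b ∣ K) :
    ∃ α β : ℤ, K • v = α • a + β • b := by
  obtain ⟨c, rfl⟩ := hK
  refine ⟨c * dt v b, c * dt a v, ?_⟩
  ext <;> simp [dt] <;> ring

lemma inv_zsmul {G : Type*} (P : ℤ × ℤ → G) (h : ℤ × ℤ) (hP : ∀ x, P (x + h) = P x) (α : ℤ) :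
    ∀ x, P (x + α • h) = P x := by
  induction α using Int.induction_on with
  | zero => intro x; simp
  | succ n ih => intro x; rw [add_smul, one_smul, ← add_assoc, hP, ih]
  | pred n ih =>
    intro x
    rw [← hP, sub_smul, one_smul, add_assoc, sub_add_cancel, ih]

lemma sum_inv_poly {ι G : Type*} [AddCommGroup G] [DecidableEq ι] (h : ℤ × ℤ) (hh : ι → ℤ × ℤ) (K : ℤ)
    (v : ℤ × ℤ) (s : Finset ι) (hK : ∀ j ∈ s, dt h (hh j) ∣ K) :
    ∀ (P : ℤ × ℤ → G) (Q : ι → ℤ × ℤ → G), (∀ x, P (x + h) = P x) →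
      (∀ j ∈ s, ∀ x, Q j (x + hh j) = Q j x) → (∀ x, P x = ∑ j ∈ s, Q j x) →
      (fwdDiff (K • v))^[s.card] P = 0 := by
  induction s using Finset.induction_on with
  | empty =>
    intro P Q _ _ h
    ext x; simpa using h x
  | insert j0 s hj ih =>
    intro P Q hP hQ hsum
    rw [Finset.card_insert_of_notMem hj, Function.iterate_succ_apply]
    obtain ⟨α, β, hab⟩ := dt_span h (hh j0) v K (hK j0 (by simp))
    refine ih (fun j hj => hK j (by simp [hj])) _
      (fun j x => Q j (x + β • hh j0) - Q j x) ?_ ?_ ?_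
    · intro x
      simp only [fwdDiff]
      rw [add_right_comm, hP, hP]
    · intro j hj x
      rw [add_right_comm, hQ j (by simp [hj]), hQ j (by simp [hj])]
    · intro x
      simp only [fwdDiff]
      rw [hab, add_comm (α • h), ← add_assoc, inv_zsmul P h hP, hsum, hsum,
        Finset.sum_insert hj, Finset.sum_insert hj, inv_zsmul (Q j0) (hh j0) (hQ j0 (by simp)),
        Finset.sum_sub_distrib]
      abel

/-- shift representation -/
noncomputable def shiftRep (p : ℕ) : Multiplicative (ℤ × ℤ) →* Module.End (ZMod p) (ℤ × ℤ → ZMod p) where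
  toFun g := LinearMap.funLeft (ZMod p) (ZMod p) (fun v => v + Multiplicative.toAdd g)
  map_one' := by ext; simp [LinearMap.funLeft]
  map_mul' a b := by
    ext f v
    simp [LinearMap.funLeft, add_assoc]

lemma dilate_prime {n : ℕ} (a : ℤ × ℤ → ℕ) (ha : ∀ v, a v ≤ 1) (f : Fin n → ℤ × ℤ)
    (hf : ∀ v, ∑ i, a (v + f i) = 1) (p : ℕ) [hp : Fact p.Prime] (hpn : n < p) (v : ℤ × ℤ) :
    ∑ i, a (v + p • f i) = 1 := by
  have hn : 0 < n := by
    rcases Nat.eq_zero_or_pos n with h | h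
    · subst h; simpa using hf 0
    · exact h
  let F : AddMonoidAlgebra (ZMod p) (ℤ × ℤ) := ∑ i, AddMonoidAlgebra.single (f i) 1
  let Φ := AddMonoidAlgebra.lift (ZMod p) (Module.End (ZMod p) (ℤ × ℤ → ZMod p)) (ℤ × ℤ) (shiftRep p)
  have hΦ : ∀ (g : ℤ × ℤ) (b : ℤ × ℤ → ZMod p) w, Φ (AddMonoidAlgebra.single g 1) b w = b (w + g) := by
    intro g b w
    simp [Φ, AddMonoidAlgebra.lift_single, shiftRep, LinearMap.funLeft]
  have hFp : F ^ p = ∑ i, AddMonoidAlgebra.single (p • f i) 1 := by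
    have : CharP (AddMonoidAlgebra (ZMod p) (ℤ × ℤ)) p :=
      charP_of_injective_algebraMap (algebraMap (ZMod p) _).injective p
    simp only [F]
    rw [sum_pow_char p]
    simp [AddMonoidAlgebra.single_pow]
  let b : ℤ × ℤ → ZMod p := fun v => (a v : ZMod p)
  have h1 : Φ F b = fun _ => 1 := by
    ext w
    simp only [F, map_sum, LinearMap.sum_apply, Finset.sum_apply, hΦ, b]
    exact_mod_cast congrArg (Nat.cast : ℕ → ZMod p) (hf w)
  have hc : ∀ c : ZMod p, Φ F (fun _ => c) = fun _ => n * c := by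
    intro c
    ext w
    simp [F, map_sum, LinearMap.sum_apply, Finset.sum_apply, hΦ]
  have hk : ∀ k, Φ (F ^ (k + 1)) b = fun _ => (n : ZMod p) ^ k := by
    intro k
    induction k with
    | zero => simpa using h1
    | succ k ih =>
      rw [pow_succ', map_mul, Module.End.mul_apply, ih, hc]
      ext; ring
  have h2 := congrFun (hk (p - 1)) v
  rw [Nat.sub_add_cancel hp.out.one_le, hFp] at h2
  simp only [map_sum, LinearMap.sum_apply, Finset.sum_apply, hΦ, b] at h2
  rw [ZMod.pow_card_sub_one_eq_one] at h2
  · have hle : ∑ i, a (v + p • f i) ≤ n := by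
      calc _ ≤ ∑ i : Fin n, 1 := Finset.sum_le_sum fun i _ => ha _
        _ = n := by simp
    have h3 : ((∑ i, a (v + p • f i) : ℕ) : ZMod p) = ((1 : ℕ) : ZMod p) := by
      push_cast; exact h2
    rw [ZMod.natCast_eq_natCast_iff'] at h3
    rwa [Nat.mod_eq_of_lt (by omega), Nat.mod_eq_of_lt hp.out.one_lt] at h3
  · rw [Ne, ZMod.natCast_eq_zero_iff]
    intro h
    exact absurd (Nat.le_of_dvd hn h) (by omega)

lemma dilate {n : ℕ} (a : ℤ × ℤ → ℕ) (ha : ∀ v, a v ≤ 1) (r : ℕ) : ∀ (f : Fin n → ℤ × ℤ)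
    (_ : ∀ v, ∑ i, a (v + f i) = 1) (_ : 0 < r) (_ : ∀ p, p.Prime → p ∣ r → n < p)
    (v : ℤ × ℤ), ∑ i, a (v + r • f i) = 1 := by
  induction r using induction_on_primes with
  | zero => intro _ _ h; omega
  | one => intro f hf _ _ v; simpa using hf v
  | prime_mul p r hp ih =>
    intro f hf hpos hpr v
    have : Fact p.Prime := ⟨hp⟩
    have := ih (fun i => p • f i) (fun v => dilate_prime a ha f hf p (hpr p hp (dvd_mul_right _ _)) v)
      (Nat.pos_of_mul_pos_left hpos) (fun p' hp' hd => hpr p' hp' (hd.mul_left _)) v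
    simpa only [smul_smul, mul_comm r p] using this

lemma dilate_fact {n : ℕ} (a : ℤ × ℤ → ℕ) (ha : ∀ v, a v ≤ 1) (f : Fin n → ℤ × ℤ)
    (hf : ∀ v, ∑ i, a (v + f i) = 1) (k : ℕ) (v : ℤ × ℤ) :
    ∑ i, a (v + (1 + n.factorial * k) • f i) = 1 := by
  refine dilate a ha _ f hf (by omega) ?_ v
  intro p hp hd
  by_contra! hle
  have h1 : p ∣ n.factorial * k := (hp.dvd_factorial.2 hle).mul_right _
  exact hp.one_lt.ne' (Nat.dvd_one.1 ((Nat.dvd_add_left h1).1 hd))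

/-- measure preserving action -/
structure Act {X : Type*} [MeasurableSpace X] (μ : Measure X) (T : ℤ × ℤ → X → X) : Prop where
  mp : ∀ g, MeasurePreserving (T g) μ μ
  zero : T 0 = id
  add : ∀ g h : ℤ × ℤ, T (g + h) = T g ∘ T h

lemma Act.add_apply {X : Type*} [MeasurableSpace X] {μ : Measure X} {T : ℤ × ℤ → X → X}
    (h : Act μ T) (a b : ℤ × ℤ) (x : X) : T a (T b x) = T (a + b) x := by
  rw [h.add]; rfl

lemma Act.orbit {X : Type*} [MeasurableSpace X] {μ : Measure X} {T : ℤ × ℤ → X → X}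
    (h : Act μ T) {p : X → Prop} (hp : ∀ᵐ x ∂μ, p x) : ∀ᵐ x ∂μ, ∀ v, p (T v x) := by
  rw [ae_all_iff]
  intro v
  exact (h.mp v).quasiMeasurePreserving.ae hp

lemma Act.iterate {X : Type*} [MeasurableSpace X] {μ : Measure X} {T : ℤ × ℤ → X → X}
    (h : Act μ T) (w : ℤ × ℤ) (n : ℕ) (x : X) : (T w)^[n] x = T (n • w) x := by
  induction n with
  | zero => simp [h.zero]
  | succ n ih =>
    rw [Function.iterate_succ_apply', ih, h.add_apply, add_smul, one_smul, add_comm]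

lemma Act.gap {X : Type*} [MeasurableSpace X] {μ : Measure X} {T : ℤ × ℤ → X → X}
    (h : Act μ T)
    (herg : ∀ S : Set X, MeasurableSet S → (∀ g : ℤ × ℤ, T g ⁻¹' S =ᵐ[μ] S) →
      μ S = 0 ∨ μ S = 1)
    (D : Set X) (hD : MeasurableSet D) (K : ℕ) (hK : 0 < K)
    (hinv : ∀ v x, x ∈ D → T (K • v) x ∈ D)
    (hlt : (K * K : ℕ) * μ D < 1) : μ D = 0 := by
  set U : Set X := ⋃ v, T v ⁻¹' D with hU
  have hUm : MeasurableSet U := MeasurableSet.iUnion fun v => (h.mp v).measurable hD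
  have hUi : ∀ g : ℤ × ℤ, T g ⁻¹' U = U := by
    intro g
    ext x
    simp only [hU, Set.mem_preimage, Set.mem_iUnion, h.add_apply]
    constructor
    · rintro ⟨v, hv⟩; exact ⟨_, hv⟩
    · rintro ⟨v, hv⟩; exact ⟨v - g, by simpa using hv⟩
  have hsub : U ⊆ ⋃ ab ∈ (Finset.range K ×ˢ Finset.range K), T ((ab.1 : ℤ), (ab.2 : ℤ)) ⁻¹' D := by
    intro x hx
    simp only [hU, Set.mem_iUnion, Set.mem_preimage] at hx
    obtain ⟨v, hv⟩ := hx
    have hK' : (0 : ℤ) < K := by exact_mod_cast hK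
    simp only [Set.mem_iUnion, Set.mem_preimage]
    refine ⟨((v.1 % K).toNat, (v.2 % K).toNat), ?_, ?_⟩
    · have h1 := Int.emod_lt_of_pos v.1 hK'
      have h2 := Int.emod_lt_of_pos v.2 hK'
      have h3 := Int.emod_nonneg v.1 hK'.ne'
      have h4 := Int.emod_nonneg v.2 hK'.ne'
      simp only [Finset.mem_product, Finset.mem_range]
      omega
    · have := hinv (-(v.1 / K), -(v.2 / K)) _ hv
      rw [h.add_apply] at this
      convert this using 2
      have h3 := Int.emod_nonneg v.1 hK'.ne'
      have h4 := Int.emod_nonneg v.2 hK'.ne'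
      ext
      · simp [h3]; rw [Int.emod_def]; ring
      · simp [h4]; rw [Int.emod_def]; ring
  have hUle : μ U ≤ (K * K : ℕ) * μ D := by
    calc μ U ≤ _ := measure_mono hsub
      _ ≤ ∑ ab ∈ (Finset.range K ×ˢ Finset.range K), μ (T ((ab.1 : ℤ), (ab.2 : ℤ)) ⁻¹' D) :=
        measure_biUnion_finset_le _ _
      _ = ∑ ab ∈ (Finset.range K ×ˢ Finset.range K), μ D :=
        Finset.sum_congr rfl fun ab _ => (h.mp _).measure_preimage hD.nullMeasurableSet
      _ = _ := by simp
  have h0 : μ U = 0 := by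
    rcases herg U hUm (fun g => by rw [hUi g]; exact ae_eq_rfl) with h | h
    · exact h
    · rw [h] at hUle; exact absurd hlt (not_lt.2 hUle)
  refine measure_mono_null ?_ h0
  intro x hx
  exact Set.mem_iUnion.2 ⟨0, by simpa [h.zero] using hx⟩

/-- translate of the indicator in L2 -/
noncomputable def eL {X : Type*} [MeasurableSpace X] {μ : Measure X} [IsProbabilityMeasure μ]
    {T : ℤ × ℤ → X → X} (h : Act μ T) {A : Set X} (hA : MeasurableSet A) (v : ℤ × ℤ) : Lp ℝ 2 μ :=
  indicatorConstLp 2 ((h.mp v).measurable hA) (measure_ne_top μ _) (1 : ℝ)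

lemma eL_ae {X : Type*} [MeasurableSpace X] {μ : Measure X} [IsProbabilityMeasure μ]
    {T : ℤ × ℤ → X → X} (h : Act μ T) {A : Set X} (hA : MeasurableSet A) (v : ℤ × ℤ) :
    ∀ᵐ x ∂μ, eL h hA v x = A.indicator (fun _ => (1:ℝ)) (T v x) := by
  filter_upwards [indicatorConstLp_coeFn (p := 2) (hs := (h.mp v).measurable hA)
    (hμs := measure_ne_top μ _) (c := (1:ℝ))] with x hx
  rw [eL, hx]; rfl

lemma eL_comp {X : Type*} [MeasurableSpace X] {μ : Measure X} [IsProbabilityMeasure μ]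
    {T : ℤ × ℤ → X → X} (h : Act μ T) {A : Set X} (hA : MeasurableSet A) (v g : ℤ × ℤ) :
    Lp.compMeasurePreserving (T g) (h.mp g) (eL h hA v) = eL h hA (v + g) := by
  apply Lp.ext
  filter_upwards [Lp.coeFn_compMeasurePreserving (eL h hA v) (h.mp g), eL_ae h hA (v + g),
    (h.mp g).quasiMeasurePreserving.ae (eL_ae h hA v)] with x h1 h2 h3
  rw [h1, h2, Function.comp_apply, h3, h.add_apply]

lemma avg_exists {X : Type*} [MeasurableSpace X] {μ : Measure X} [IsProbabilityMeasure μ]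
    {T : ℤ × ℤ → X → X} (h : Act μ T) {A : Set X} (hA : MeasurableSet A) (w : ℤ × ℤ) (q : ℕ) :
    ∃ φ : Lp ℝ 2 μ, Filter.Tendsto
      (fun N : ℕ => (N : ℝ)⁻¹ • ∑ k ∈ Finset.range N, eL h hA ((1 + q * k) • w))
      Filter.atTop (nhds φ) ∧ ∀ᵐ x ∂μ, φ (T (q • w) x) = φ x := by
  let U : Lp ℝ 2 μ →L[ℝ] Lp ℝ 2 μ :=
    (Lp.compMeasurePreservingₗᵢ ℝ (T (q • w)) (h.mp _)).toContinuousLinearMap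
  have hU : ∀ ψ, U ψ = Lp.compMeasurePreserving (T (q • w)) (h.mp _) ψ := fun ψ => rfl
  have hit : ∀ k : ℕ, U^[k] (eL h hA w) = eL h hA ((1 + q * k) • w) := by
    intro k
    induction k with
    | zero => simp
    | succ k ih =>
      rw [Function.iterate_succ_apply', ih, hU, eL_comp]
      congr 1
      simp only [add_smul, mul_add, mul_one]
      abel
  have ht := U.tendsto_birkhoffAverage_orthogonalProjection
    (LinearIsometry.norm_toContinuousLinearMap_le _) (eL h hA w)
  obtain ⟨φ, hφ⟩ : ∃ φ, φ = (U.eqLocus (1 : Lp ℝ 2 μ →L[ℝ] Lp ℝ 2 μ)).orthogonalProjectionOnto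
    (eL h hA w) := ⟨_, rfl⟩
  rw [← hφ] at ht
  have hm' : U φ.1 = φ.1 := φ.2
  refine ⟨φ.1, ?_, ?_⟩
  · simpa only [birkhoffAverage, birkhoffSum, hit, id] using ht
  · filter_upwards [Lp.coeFn_compMeasurePreserving φ.1 (h.mp (q • w))] with x hx
    rw [← hU, hm'] at hx
    exact hx.symm

lemma tile_ae {X : Type*} [MeasurableSpace X] {μ : Measure X} 
    {T : ℤ × ℤ → X → X} (h : Act μ T) (A : Set X) (n : ℕ) (g : Fin n → ℤ × ℤ)
    (hdisj : ∀ i j, i ≠ j → μ (T (g i) '' A ∩ T (g j) '' A) = 0)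
    (hcov : (⋃ i, T (g i) '' A) =ᵐ[μ] (Set.univ : Set X)) :
    ∀ᵐ x ∂μ, ∀ v, ∑ i, A.indicator (fun _ => (1 : ℕ)) (T (v + -g i) x) = 1 := by
  have himg : ∀ v y, y ∈ T v '' A ↔ T (-v) y ∈ A := by
    intro v y
    constructor
    · rintro ⟨x, hx, rfl⟩; rw [h.add_apply]; simpa [h.zero] using hx
    · intro hy; exact ⟨_, hy, by rw [h.add_apply]; simp [h.zero]⟩
  have h1 : ∀ᵐ x ∂μ, ∑ i, A.indicator (fun _ => (1 : ℕ)) (T (-g i) x) = 1 := by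
    have hd : ∀ᵐ x ∂μ, ∀ i j, i ≠ j → ¬ (x ∈ T (g i) '' A ∩ T (g j) '' A) := by
      simp only [ae_all_iff]
      intro i j hij
      exact measure_eq_zero_iff_ae_notMem.1 (hdisj i j hij)
    have hc : ∀ᵐ x ∂μ, x ∈ ⋃ i, T (g i) '' A := by
      filter_upwards [hcov.mem_iff] with x hx
      exact hx.2 trivial
    filter_upwards [hd, hc] with x hd hc
    obtain ⟨i, hi⟩ := Set.mem_iUnion.1 hc
    rw [Finset.sum_eq_single i]
    · rw [Set.indicator_of_mem ((himg _ _).1 hi)]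
    · intro j _ hj
      rw [Set.indicator_of_notMem]
      intro hj'
      exact hd i j hj.symm ⟨hi, (himg _ _).2 hj'⟩
    · simp
  filter_upwards [h.orbit h1] with x hx v
  refine Eq.trans (Finset.sum_congr rfl fun i _ => ?_) (hx v)
  rw [h.add_apply, add_comm]

lemma struct0 {X : Type*} [MeasurableSpace X] {μ : Measure X} [IsProbabilityMeasure μ]
    {T : ℤ × ℤ → X → X} (h : Act μ T) (A : Set X) (hA : MeasurableSet A) (n : ℕ)
    (f : Fin n → ℤ × ℤ)
    (ht : ∀ᵐ x ∂μ, ∀ v, ∑ i, A.indicator (fun _ => (1 : ℕ)) (T (v + f i) x) = 1) :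
    ∃ φ : Fin n → X → ℝ, (∀ i, Measurable (φ i)) ∧ (∀ i, ∀ᵐ x ∂μ, 0 ≤ φ i x) ∧
      (∀ i, ∀ᵐ x ∂μ, φ i (T (n.factorial • f i) x) = φ i x) ∧
      (∀ i, f i = 0 → ∀ᵐ x ∂μ, φ i x = A.indicator (fun _ => (1:ℝ)) x) ∧
      ∀ᵐ x ∂μ, ∑ i, φ i x = 1 := by
  choose φ hφ1 hφ2 using fun i => avg_exists h hA (f i) n.factorial
  have hnn : ∀ i, 0 ≤ φ i := by
    intro i
    refine ge_of_tendsto' (hφ1 i) fun N => ?_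
    have hs : 0 ≤ ∑ k ∈ Finset.range N, eL h hA ((1 + n.factorial * k) • f i) := by
      refine Finset.sum_nonneg fun k _ => ?_
      rw [← Lp.coeFn_nonneg]
      filter_upwards [eL_ae h hA ((1 + n.factorial * k) • f i)] with x hx
      rw [hx]
      exact Set.indicator_nonneg (fun _ _ => zero_le_one) _
    rw [← Lp.coeFn_nonneg] at hs ⊢
    filter_upwards [hs, Lp.coeFn_smul (N : ℝ)⁻¹
      (∑ k ∈ Finset.range N, eL h hA ((1 + n.factorial * k) • f i))] with x h1 h2
    rw [h2]
    exact mul_nonneg (by positivity) h1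
  have hsumk : ∀ k : ℕ, ∑ i, eL h hA ((1 + n.factorial * k) • f i) = Lp.const 2 μ (1:ℝ) := by
    intro k
    apply Lp.ext
    have hall : ∀ᵐ x ∂μ, ∀ i, eL h hA ((1 + n.factorial * k) • f i) x
        = A.indicator (fun _ => (1:ℝ)) (T ((1 + n.factorial * k) • f i) x) := by
      rw [ae_all_iff]; intro i; exact eL_ae h hA _
    filter_upwards [hall, ht, Lp.coeFn_const (p := 2) (μ := μ) (1:ℝ),
      Lp.coeFn_finsetSum Finset.univ (fun i => eL h hA ((1 + n.factorial * k) • f i))] with x h1 h2 h3 h4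
    rw [h3, h4]
    simp only [Finset.sum_apply, h1, Function.const_apply]
    have := dilate_fact (fun v => A.indicator (fun _ => (1 : ℕ)) (T v x)) (fun v => by
      by_cases hv : T v x ∈ A <;> simp [hv]) f h2 k 0
    simp only [zero_add] at this
    have h5 := congrArg (Nat.cast : ℕ → ℝ) this
    push_cast at h5
    refine Eq.trans (Finset.sum_congr rfl fun i _ => ?_) h5
    by_cases hv : T ((1 + n.factorial * k) • f i) x ∈ A
    · rw [Set.indicator_of_mem hv, Set.indicator_of_mem hv, Nat.cast_one]
    · rw [Set.indicator_of_notMem hv, Set.indicator_of_notMem hv, Nat.cast_zero]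
  have hsum : ∑ i, φ i = Lp.const 2 μ (1:ℝ) := by
    have t1 := tendsto_finsetSum Finset.univ fun i (_ : i ∈ Finset.univ) => hφ1 i
    refine tendsto_nhds_unique t1 ?_
    refine tendsto_const_nhds.congr' ?_
    filter_upwards [Filter.eventually_gt_atTop 0] with N hN
    rw [← Finset.smul_sum, Finset.sum_comm]
    simp only [hsumk]
    rw [Finset.sum_const, Finset.card_range, ← Nat.cast_smul_eq_nsmul ℝ, smul_smul,
      inv_mul_cancel₀ (by positivity), one_smul]
  have hm : ∀ i, Measurable (φ i : X → ℝ) := fun i => (Lp.stronglyMeasurable (φ i)).measurable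
  refine ⟨fun i => φ i, hm, fun i => ?_, hφ2, ?_, ?_⟩
  · exact (Lp.coeFn_nonneg (φ i)).2 (hnn i)
  · intro i hi
    have : φ i = eL h hA 0 := by
      refine tendsto_nhds_unique (hφ1 i) ?_
      refine tendsto_const_nhds.congr' ?_
      filter_upwards [Filter.eventually_gt_atTop 0] with N hN
      simp only [hi, smul_zero]
      rw [Finset.sum_const, Finset.card_range, ← Nat.cast_smul_eq_nsmul ℝ, smul_smul,
        inv_mul_cancel₀ (by positivity), one_smul]
    filter_upwards [eL_ae h hA 0] with x hx
    rw [this, hx, h.zero]; rfl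
  · filter_upwards [Lp.coeFn_const (p := 2) (μ := μ) (1:ℝ), 
      Lp.coeFn_finsetSum Finset.univ φ] with x h3 h4
    rw [hsum, h3] at h4
    simpa using h4.symm

lemma dt_trans {a b c : ℤ × ℤ} (hb : b ≠ 0) (h1 : dt a b = 0) (h2 : dt b c = 0) : dt a c = 0 := by
  simp only [dt] at *
  by_cases h : b.1 = 0
  · have h' : b.2 ≠ 0 := fun h' => hb (Prod.ext h h')
    refine (mul_eq_zero.1 ?_).resolve_left h'
    linear_combination c.2 * h1 + a.2 * h2
  · refine (mul_eq_zero.1 ?_).resolve_left h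
    linear_combination c.1 * h1 + a.1 * h2

lemma ae_inv_zsmul {X : Type*} [MeasurableSpace X] {μ : Measure X}
    {T : ℤ × ℤ → X → X} (h : Act μ T) (φ : X → ℝ) (w : ℤ × ℤ)
    (hφ : ∀ᵐ x ∂μ, φ (T w x) = φ x) (c : ℤ) : ∀ᵐ x ∂μ, φ (T (c • w) x) = φ x := by
  filter_upwards [h.orbit hφ] with x hx
  have := inv_zsmul (fun v => φ (T v x)) w (fun v => by
    have := hx v
    rwa [h.add_apply, add_comm] at this) c 0
  simpa [h.zero] using this

lemma merge {X : Type*} [MeasurableSpace X] {μ : Measure X}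
    {T : ℤ × ℤ → X → X} (h : Act μ T) {κ : Type} [Fintype κ] (φ : κ → X → ℝ) (w : κ → ℤ × ℤ)
    (hw : ∀ i, w i ≠ 0)
    (hm : ∀ i, Measurable (φ i)) (h0 : ∀ i, ∀ᵐ x ∂μ, 0 ≤ φ i x)
    (hinv : ∀ i, ∀ᵐ x ∂μ, φ i (T (w i) x) = φ i x) :
    ∃ (ι : Type) (_ : Fintype ι) (ψ : ι → X → ℝ) (z : ι → ℤ × ℤ),
      (∀ i, z i ≠ 0) ∧ (∀ i j, i ≠ j → dt (z i) (z j) ≠ 0) ∧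
      (∀ i, Measurable (ψ i)) ∧ (∀ i, ∀ᵐ x ∂μ, 0 ≤ ψ i x) ∧
      (∀ i, ∀ᵐ x ∂μ, ψ i (T (z i) x) = ψ i x) ∧ (∀ x, ∑ i, ψ i x = ∑ i, φ i x) := by
  classical
  let s : Setoid κ := ⟨fun i j => dt (w i) (w j) = 0, by
    refine ⟨fun i => by simp [dt, mul_comm], fun {i j} hij => ?_, fun {i j k} h1 h2 => dt_trans (hw j) h1 h2⟩
    simp only [dt] at *; linear_combination -hij⟩
  let c : κ → ℤ := fun j => if (w j).1 = 0 then (w j).2 else (w j).1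
  have hc : ∀ j, c j ≠ 0 := by
    intro j
    by_cases h : (w j).1 = 0
    · simp only [c, h, if_true]
      exact fun h' => hw j (Prod.ext h h')
    · simp [c, h]
  have hpar : ∀ i j, dt (w i) (w j) = 0 → ∃ d : ℤ, c j • w i = d • w j := by
    intro i j hij
    simp only [dt] at hij
    by_cases h : (w j).1 = 0
    · refine ⟨(w i).2, ?_⟩
      simp only [c, h, if_true]
      ext
      · simp only [Prod.smul_fst, smul_eq_mul]; linear_combination hij
      · simp [mul_comm]
    · refine ⟨(w i).1, ?_⟩
      simp only [c, h, if_false]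
      ext
      · simp [mul_comm]
      · simp only [Prod.smul_snd, smul_eq_mul]; linear_combination -hij
  let C : ℤ := ∏ j, c j
  have hC : C ≠ 0 := Finset.prod_ne_zero_iff.2 fun j _ => hc j
  refine ⟨Quotient s, inferInstance, fun Q x => ∑ i with (⟦i⟧ : Quotient s) = Q, φ i x,
    fun Q => C • w Q.out, ?_, ?_, ?_, ?_, ?_, ?_⟩
  · intro Q
    exact smul_ne_zero hC (hw _)
  · intro P Q hPQ h0
    apply hPQ
    have h1 : C * C * dt (w P.out) (w Q.out) = 0 := by
      simp only [dt, Prod.smul_fst, Prod.smul_snd, smul_eq_mul] at *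
      linear_combination h0
    have h2 : dt (w P.out) (w Q.out) = 0 := (mul_eq_zero.1 h1).resolve_left (mul_ne_zero hC hC)
    rw [← Quotient.out_eq P, ← Quotient.out_eq Q]
    exact Quotient.sound h2
  · intro Q
    exact Finset.measurable_sum _ fun i _ => hm i
  · intro Q
    filter_upwards [ae_all_iff.2 h0] with x hx
    exact Finset.sum_nonneg fun i _ => hx i
  · intro Q
    have : ∀ i, (⟦i⟧ : Quotient s) = Q → ∀ᵐ x ∂μ, φ i (T (C • w Q.out) x) = φ i x := by
      intro i hi
      have h1 : dt (w Q.out) (w i) = 0 := by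
        have : (⟦Q.out⟧ : Quotient s) = ⟦i⟧ := by rw [Quotient.out_eq, hi]
        exact Quotient.exact this
      obtain ⟨d, hd⟩ := hpar _ _ h1
      obtain ⟨e, he⟩ : c i ∣ C := Finset.dvd_prod_of_mem c (Finset.mem_univ i)
      have : C • w Q.out = (e * d) • w i := by
        rw [he, mul_comm, mul_smul, hd, smul_smul]
      rw [this]
      exact ae_inv_zsmul h _ _ (hinv i) _
    have h2 : ∀ᵐ x ∂μ, ∀ i, (⟦i⟧ : Quotient s) = Q → φ i (T (C • w Q.out) x) = φ i x := by
      rw [ae_all_iff]; intro i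
      by_cases hi : (⟦i⟧ : Quotient s) = Q
      · filter_upwards [this i hi] with x hx _; exact hx
      · exact Filter.Eventually.of_forall fun x hx => absurd hx hi
    filter_upwards [h2] with x hx
    refine Finset.sum_congr rfl fun i hi => hx i ?_
    simpa using hi
  · intro x
    exact Finset.sum_fiberwise _ _ _

lemma struct1 {X : Type*} [MeasurableSpace X] {μ : Measure X} [IsProbabilityMeasure μ]
    {T : ℤ × ℤ → X → X} (h : Act μ T) (A : Set X) (hA : MeasurableSet A) (n : ℕ) (g : Fin n → ℤ × ℤ)
    (ht : ∀ᵐ x ∂μ, ∀ v, ∑ i, A.indicator (fun _ => (1 : ℕ)) (T (v + -g i) x) = 1) :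
    ∃ (ι : Type) (_ : Fintype ι) (ψ : ι → X → ℝ) (z : ι → ℤ × ℤ),
      (∀ i, z i ≠ 0) ∧ (∀ i j, i ≠ j → dt (z i) (z j) ≠ 0) ∧
      (∀ i, Measurable (ψ i)) ∧ (∀ i, ∀ᵐ x ∂μ, 0 ≤ ψ i x) ∧
      (∀ i, ∀ᵐ x ∂μ, ψ i (T (z i) x) = ψ i x) ∧
      (∀ᵐ x ∂μ, A.indicator (fun _ => (1 : ℝ)) x + ∑ i, ψ i x = 1) := by
  classical
  obtain ⟨x0, hx0⟩ := ht.exists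
  have hn : 0 < n := by
    rcases Nat.eq_zero_or_pos n with h | h
    · subst h; simpa using hx0 0
    · exact h
  let i0 : Fin n := ⟨0, hn⟩
  let f : Fin n → ℤ × ℤ := fun i => -g i + g i0
  have hff : ∀ x v i, T (v + f i) x = T ((v + g i0) + -g i) x := by
    intro x v i
    congr 1; simp only [f]; abel
  have ht' : ∀ᵐ x ∂μ, ∀ v, ∑ i, A.indicator (fun _ => (1 : ℕ)) (T (v + f i) x) = 1 := by
    filter_upwards [ht] with x hx v
    simp only [hff]
    exact hx _
  have hf0 : f i0 = 0 := by simp [f]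
  have hfne : ∀ i, i ≠ i0 → f i ≠ 0 := by
    intro i hi hfi
    obtain ⟨x, hx⟩ := ht'.exists
    obtain ⟨j, -, hj⟩ := Finset.exists_ne_zero_of_sum_ne_zero (by rw [hx 0]; exact one_ne_zero)
    have hjA : T (f j) x ∈ A := by
      have := Set.mem_of_indicator_ne_zero hj
      simpa using this
    have h2 := hx (f j)
    have h3 : ∑ l ∈ {i, i0}, A.indicator (fun _ => (1 : ℕ)) (T (f j + f l) x) ≤ 1 := by
      refine le_trans ?_ h2.le
      exact Finset.sum_le_sum_of_subset (Finset.subset_univ _)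
    rw [Finset.sum_pair hi, hfi, hf0, add_zero, Set.indicator_of_mem hjA] at h3
    omega
  obtain ⟨φ, h1, h2, h3, h4, h5⟩ := struct0 h A hA n f ht'
  obtain ⟨ι, hι, ψ, z, k1, k2, k3, k4, k5, k6⟩ := merge h (κ := {i : Fin n // i ≠ i0})
    (fun i => φ i) (fun i => n.factorial • f i)
    (fun i => smul_ne_zero (Nat.factorial_ne_zero n) (hfne i.1 i.2)) (fun i => h1 i) (fun i => h2 i)
    (fun i => h3 i)
  refine ⟨ι, hι, ψ, z, k1, k2, k3, k4, k5, ?_⟩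
  filter_upwards [h4 i0 hf0, h5] with x a b
  rw [k6, ← a, ← b]
  exact (Fintype.sum_eq_add_sum_subtype_ne (fun i => φ i x) i0).symm

/-- goodness of a point -/
structure Good {X ι : Type*} [Fintype ι] (T : ℤ × ℤ → X → X) (A : Set X) (φ : ι → X → ℝ)
    (w : ι → ℤ × ℤ) (x : X) : Prop where
  nn : ∀ j, 0 ≤ φ j x
  inv : ∀ j, φ j (T (w j) x) = φ j x
  sum : A.indicator (fun _ => (1 : ℝ)) x + ∑ i, φ i x = 1

lemma Good.zero {X ι : Type*} [Fintype ι] {T : ℤ × ℤ → X → X} {A : Set X} {φ : ι → X → ℝ}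
    {w : ι → ℤ × ℤ} {x : X} (h : Good T A φ w x) (hx : x ∈ A) (j : ι) : φ j x = 0 := by
  have := h.sum
  rw [Set.indicator_of_mem hx] at this
  have h0 : ∑ i, φ i x = 0 := by linarith
  exact (Finset.sum_eq_zero_iff_of_nonneg fun j _ => h.nn j).1 h0 j (Finset.mem_univ _)

lemma Good.mem {X ι : Type*} [Fintype ι] {T : ℤ × ℤ → X → X} {A : Set X} {φ : ι → X → ℝ}
    {w : ι → ℤ × ℤ} {x : X} (h : Good T A φ w x) (hx : ∀ j, φ j x = 0) : x ∈ A := by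
  by_contra hA
  have := h.sum
  rw [Set.indicator_of_notMem hA] at this
  simp [hx] at this

lemma Good.le_one {X ι : Type*} [Fintype ι] {T : ℤ × ℤ → X → X} {A : Set X} {φ : ι → X → ℝ}
    {w : ι → ℤ × ℤ} {x : X} (h : Good T A φ w x) : ∑ j, φ j x ≤ 1 := by
  have := h.sum
  have h2 : 0 ≤ A.indicator (fun _ => (1 : ℝ)) x := Set.indicator_nonneg (fun _ _ => zero_le_one) _
  linarith

lemma orbit_inv {X ι : Type*} [MeasurableSpace X] {μ : Measure X} [Fintype ι] {T : ℤ × ℤ → X → X}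
    (h : Act μ T) {A : Set X} {φ : ι → X → ℝ}
    {w : ι → ℤ × ℤ} {x : X} (hg : ∀ v, Good T A φ w (T v x)) (j : ι) (v : ℤ × ℤ) (α : ℤ) :
    φ j (T (v + α • w j) x) = φ j (T v x) := by
  refine inv_zsmul (fun v => φ j (T v x)) (w j) (fun v => ?_) α v
  have := (hg v).inv j
  rwa [h.add_apply, add_comm] at this

lemma orbit_poly {X ι : Type*} [MeasurableSpace X] {μ : Measure X} [Fintype ι] [DecidableEq ι]
    {T : ℤ × ℤ → X → X}
    (h : Act μ T) {A : Set X} {φ : ι → X → ℝ}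
    {w : ι → ℤ × ℤ} {x : X} (hg : ∀ v, Good T A φ w (T v x)) (i : ι) (K : ℤ)
    (hK : ∀ j, j ≠ i → dt (w i) (w j) ∣ K) (v : ℤ × ℤ) :
    (fwdDiff (K • v))^[(Finset.univ.erase i).card]
      (fun v => (φ i (T v x) : AddCircle (1:ℝ))) = 0 := by
  refine sum_inv_poly (w i) w K v (Finset.univ.erase i) (fun j hj => hK j (by simpa using hj)) _
    (fun j v => -(φ j (T v x) : AddCircle (1:ℝ))) ?_ ?_ ?_
  · intro v
    have := orbit_inv h hg i v 1
    rw [one_smul] at this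
    simp only [this]
  · intro j _ v
    have := orbit_inv h hg j v 1
    rw [one_smul] at this
    simp only [this]
  · intro v
    have h1 := (hg v).sum
    rw [← Finset.add_sum_erase _ _ (Finset.mem_univ i)] at h1
    have h2 : ((A.indicator (fun _ => (1 : ℝ)) (T v x) : ℝ) : AddCircle (1:ℝ)) = 0 := by
      by_cases hv : T v x ∈ A
      · rw [Set.indicator_of_mem hv]; exact AddCircle.coe_period 1
      · rw [Set.indicator_of_notMem hv]; rfl
    have h3 := congrArg (fun r : ℝ => (r : AddCircle (1:ℝ))) h1
    have h4 : ((1 : ℝ) : AddCircle (1:ℝ)) = 0 := AddCircle.coe_period 1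
    simp only [AddCircle.coe_add, h2, h4, zero_add] at h3
    rw [Finset.sum_neg_distrib, eq_neg_iff_add_eq_zero, ← h3]
    congr 1
    exact (map_sum (QuotientAddGroup.mk' (AddSubgroup.zmultiples (1:ℝ))) _ _).symm

lemma integrality {X ι : Type*} [MeasurableSpace X] {μ : Measure X} [IsProbabilityMeasure μ]
    [Fintype ι] [DecidableEq ι] {T : ℤ × ℤ → X → X} (h : Act μ T)
    (herg : ∀ S : Set X, MeasurableSet S → (∀ g : ℤ × ℤ, T g ⁻¹' S =ᵐ[μ] S) →
      μ S = 0 ∨ μ S = 1)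
    {A : Set X} (hA : MeasurableSet A) {φ : ι → X → ℝ} {w : ι → ℤ × ℤ}
    (hm : ∀ i, Measurable (φ i)) (hw : ∀ i, w i ≠ 0) (hd : ∀ i j, i ≠ j → dt (w i) (w j) ≠ 0)
    (hg : ∀ᵐ x ∂μ, ∀ v, Good T A φ w (T v x)) (i : ι) :
    ∃ K : ℕ, 0 < K ∧ ∀ᵐ x ∂μ, x ∈ A → ∀ v, (φ i (T (K • v) x) : AddCircle (1:ℝ)) = 0 := by
  set K0 : ℕ := ∏ j ∈ Finset.univ.erase i, (dt (w i) (w j)).natAbs with hK0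
  have hK0pos : 0 < K0 := Finset.prod_pos fun j hj =>
    Int.natAbs_pos.2 (hd i j (Ne.symm (by simpa using hj)))
  have hK0d : ∀ j, j ≠ i → dt (w i) (w j) ∣ (K0 : ℤ) := by
    intro j hj
    rw [← Int.natAbs_dvd, Int.natCast_dvd_natCast]
    exact Finset.dvd_prod_of_mem (fun j => (dt (w i) (w j)).natAbs) (by simpa using hj)
  set u : ℤ × ℤ := (-(w i).2, (w i).1) with hu
  set N : ℕ := (dt (w i) u).natAbs with hN
  have hNpos : 0 < N := by
    apply Int.natAbs_pos.2
    simp only [dt, hu]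
    intro h0
    apply hw i
    have : (w i).1 ^ 2 + (w i).2 ^ 2 = 0 := by linear_combination h0
    ext
    · simp only [Prod.fst_zero]; nlinarith [sq_nonneg (w i).1, sq_nonneg (w i).2]
    · simp only [Prod.snd_zero]; nlinarith [sq_nonneg (w i).1, sq_nonneg (w i).2]
  set K1 : ℕ := K0 * N with hK1
  have hK1pos : 0 < K1 := Nat.mul_pos hK0pos hNpos
  have hK1d : ∀ j, j ≠ i → dt (w i) (w j) ∣ (K1 : ℤ) := by
    intro j hj
    rw [hK1]; push_cast
    exact (hK0d j hj).mul_right _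
  set D := (Finset.univ.erase i).card with hD
  -- recurrence
  have hrec : ∀ z : ℤ × ℤ, ∀ᵐ x ∂μ, x ∈ A →
      ∃ k : ℕ, 0 < k ∧ ∀ n : ℕ, k • (φ i (T (n • (K0 • z)) x) : AddCircle (1:ℝ)) = 0 := by
    intro z
    filter_upwards [hg, (h.mp (K0 • z)).conservative.ae_mem_imp_frequently_image_mem
      hA.nullMeasurableSet] with x hx hr hxA
    have hp := orbit_poly h hx i K0 hK0d z
    have hp' : (fwdDiff 1)^[D] (fun n : ℕ => (φ i (T (n • (K0 • z)) x) : AddCircle (1:ℝ))) = 0 := by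
      ext n
      have := seq_diff (fun v => (φ i (T v x) : AddCircle (1:ℝ))) 0 ((K0 : ℤ) • z) D n
      simp only [zero_add, natCast_zsmul] at this hp
      rw [this, hp]; rfl
    refine poly_torsion D _ hp' ?_
    intro M
    obtain ⟨n, hn, hnA⟩ := Filter.frequently_atTop.1 (hr hxA) M
    rw [h.iterate] at hnA
    refine ⟨n, hn, ?_⟩
    simp only [(hx _).zero hnA i]
    rfl
  let S : ℕ → Set X := fun k => {x | ∀ v, k • (φ i (T (K1 • v) x) : AddCircle (1:ℝ)) = 0}
  have hSm : ∀ k, MeasurableSet (S k) := by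
    intro k
    simp only [S, Set.setOf_forall]
    refine MeasurableSet.iInter fun v => ?_
    have h1 : Measurable fun x => ((k • φ i (T (K1 • v) x) : ℝ) : AddCircle (1:ℝ)) :=
      AddCircle.measurable_mk'.comp (((hm i).comp (h.mp _).measurable).const_smul k)
    exact h1 (measurableSet_singleton 0)
  have hSinv : ∀ k v x, x ∈ S k ↔ T (K1 • v) x ∈ S k := by
    intro k v x
    simp only [S, Set.mem_setOf_eq, h.add_apply, ← smul_add]
    constructor
    · intro H v'; exact H _
    · intro H v'; have := H (v' - v); rwa [sub_add_cancel] at this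
  have hSmono : ∀ a b, a ∣ b → S a ⊆ S b := by
    rintro a b ⟨c, rfl⟩ x hx v
    rw [mul_comm, mul_smul, hx v, smul_zero]
  have hAS : ∀ᵐ x ∂μ, x ∈ A → x ∈ ⋃ m : ℕ, S m.factorial := by
    filter_upwards [hg, hrec u, hrec (-u)] with x hx h1 h2 hxA
    obtain ⟨k1, hk1, H1⟩ := h1 hxA
    obtain ⟨k2, hk2, H2⟩ := h2 hxA
    refine Set.mem_iUnion.2 ⟨k1 * k2, hSmono (k1 * k2) _
      (Nat.dvd_factorial (Nat.mul_pos hk1 hk2) le_rfl) ?_⟩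
    intro v
    obtain ⟨α, β, hab⟩ := dt_span (w i) u v N (Int.dvd_natAbs.2 dvd_rfl)
    have e1 : K1 • v = β • (K0 • u) + (K0 * α) • w i := by
      rw [hK1, mul_smul, ← natCast_zsmul v N, hab, smul_add, mul_smul, natCast_zsmul,
        smul_comm K0 β, add_comm]
    rw [e1, orbit_inv h hx]
    rcases Int.eq_nat_or_neg β with ⟨n, rfl | rfl⟩
    · rw [mul_comm, mul_smul, natCast_zsmul, H1, smul_zero]
    · rw [mul_smul, neg_smul, natCast_zsmul, ← smul_neg, ← smul_neg, H2, smul_zero]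
  obtain ⟨m, hmm⟩ : ∃ m : ℕ, ∀ᵐ x ∂μ, x ∈ A → x ∈ S m.factorial := by
    let E : ℕ → Set X := fun m => (⋃ m : ℕ, S m.factorial) \ S m.factorial
    have hEm : ∀ m, MeasurableSet (E m) := fun m =>
      (MeasurableSet.iUnion fun m => hSm _).diff (hSm _)
    have hEanti : Antitone E := fun a b hab =>
      Set.diff_subset_diff_right (hSmono _ _ (Nat.factorial_dvd_factorial hab))
    have hEint : ⋂ m, E m = ∅ := by
      ext x
      simp only [E, Set.mem_iInter, Set.mem_diff, Set.mem_iUnion, Set.mem_empty_iff_false, iff_false]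
      intro H
      obtain ⟨m, hm⟩ := (H 0).1
      exact (H m).2 hm
    have htend := tendsto_measure_iInter_atTop (μ := μ) (fun m => (hEm m).nullMeasurableSet) hEanti
      ⟨0, measure_ne_top μ _⟩
    rw [hEint, measure_empty] at htend
    have htend2 := ENNReal.Tendsto.const_mul (a := ((K1 * K1 : ℕ) : ENNReal)) htend
      (Or.inr (ENNReal.natCast_ne_top _))
    rw [mul_zero] at htend2
    obtain ⟨m, hlt⟩ := (htend2.eventually (gt_mem_nhds zero_lt_one)).exists
    refine ⟨m, ?_⟩
    have h0 := h.gap herg (E m) (hEm m) K1 hK1pos (by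
      rintro v x ⟨hx1, hx2⟩
      obtain ⟨l, hl⟩ := Set.mem_iUnion.1 hx1
      exact ⟨Set.mem_iUnion.2 ⟨l, (hSinv _ v x).1 hl⟩, fun H => hx2 ((hSinv _ v x).2 H)⟩) hlt
    filter_upwards [hAS, measure_eq_zero_iff_ae_notMem.1 h0] with x a b hxA
    by_contra H
    exact b ⟨a hxA, H⟩
  refine ⟨m.factorial ^ D * K1, Nat.mul_pos (pow_pos (Nat.factorial_pos m) _) hK1pos, ?_⟩
  filter_upwards [hg, hmm] with x hx hS hxA v
  have hp := orbit_poly h hx i K1 hK1d v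
  have hp' : (fwdDiff 1)^[D] (fun n : ℕ => (φ i (T (n • (K1 • v)) x) : AddCircle (1:ℝ))) = 0 := by
    ext n
    have := seq_diff (fun v => (φ i (T v x) : AddCircle (1:ℝ))) 0 ((K1 : ℤ) • v) D n
    simp only [zero_add, natCast_zsmul] at this hp
    rw [this, hp]; rfl
  have := poly_period m.factorial D _ hp' (fun n => by
    rw [smul_comm n K1 v]; exact hS hxA _) 0
  simp only [zero_add, smul_smul, zero_mul, zero_smul, h.zero, id] at this
  rw [this]
  have hz := (hx 0).zero (by simpa [h.zero] using hxA) i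
  rw [h.zero] at hz
  simp only [id] at hz
  rw [hz]; rfl

lemma coe_zero_cases {r : ℝ} (h0 : 0 ≤ r) (h1 : r ≤ 1) (h : (r : AddCircle (1:ℝ)) = 0) :
    r = 0 ∨ r = 1 := by
  obtain ⟨n, hn⟩ := (AddCircle.coe_eq_zero_iff (1:ℝ)).1 h
  rw [zsmul_eq_mul, mul_one] at hn
  subst hn
  have a : 0 ≤ n := by exact_mod_cast h0
  have b : n ≤ 1 := by exact_mod_cast h1
  interval_cases n <;> simp

/-- **Theorem 1.3.** Let `(X, μ)` be a probability space with an ergodic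
measure-preserving action `T` of `ℤ²`, and let `A ⊆ X` be a measurable set such that
the sets `g₁A, …, gₙA` form a partition of `X` up to `μ`-null sets. Then `A` admits a
finite partition `(A₁, …, A_m)` into measurable sets, each of which is invariant (up
to `μ`-null sets) under the action of some nonzero element of `ℤ²`. -/
theorem partition_into_onePeriodic_pieces
    {X : Type*} [MeasurableSpace X] (μ : Measure X) [IsProbabilityMeasure μ]
    (T : ℤ × ℤ → X → X)
    (hmp : ∀ g, MeasurePreserving (T g) μ μ)
    (hT0 : T 0 = id)
    (hTadd : ∀ g h : ℤ × ℤ, T (g + h) = T g ∘ T h)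
    (herg : ∀ S : Set X, MeasurableSet S → (∀ g : ℤ × ℤ, T g ⁻¹' S =ᵐ[μ] S) →
      μ S = 0 ∨ μ S = 1)
    (A : Set X) (hA : MeasurableSet A)
    (n : ℕ) (g : Fin n → ℤ × ℤ)
    (hdisj : ∀ i j, i ≠ j → μ (T (g i) '' A ∩ T (g j) '' A) = 0)
    (hcov : (⋃ i, T (g i) '' A) =ᵐ[μ] (Set.univ : Set X)) :
    ∃ (m : ℕ) (As : Fin m → Set X),
      (∀ i, MeasurableSet (As i)) ∧
      (∀ i j, i ≠ j → Disjoint (As i) (As j)) ∧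
      (⋃ i, As i) = A ∧
      ∀ i, ∃ h : ℤ × ℤ, h ≠ 0 ∧ T h '' As i =ᵐ[μ] As i := by
  classical
  have h : Act μ T := ⟨hmp, hT0, hTadd⟩
  have ht := tile_ae h A n g hdisj hcov
  obtain ⟨ι, hι, φ, w, hw, hd, hm, k1, k2, k3⟩ := struct1 h A hA n g ht
  have hg : ∀ᵐ x ∂μ, ∀ v, Good T A φ w (T v x) := by
    apply h.orbit
    filter_upwards [ae_all_iff.2 k1, ae_all_iff.2 k2, k3] with x a b c
    exact ⟨a, b, c⟩
  choose L hLpos hL using fun i => integrality h herg hA hm hw hd hg i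
  set M : ℕ := ∏ p ∈ (Finset.univ : Finset (ι × ι)) with p.1 ≠ p.2, (dt (w p.1) (w p.2)).natAbs with hM
  have hMpos : 0 < M := Finset.prod_pos fun p hp =>
    Int.natAbs_pos.2 (hd _ _ (by simpa using hp))
  set K : ℕ := (∏ i, L i) * M with hK
  have hKpos : 0 < K := Nat.mul_pos (Finset.prod_pos fun i _ => hLpos i) hMpos
  have hKd : ∀ i j, i ≠ j → dt (w i) (w j) ∣ (K : ℤ) := by
    intro i j hij
    rw [← Int.natAbs_dvd, Int.natCast_dvd_natCast]
    refine Dvd.dvd.mul_left ?_ _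
    exact Finset.dvd_prod_of_mem (fun p : ι × ι => (dt (w p.1) (w p.2)).natAbs)
      (a := (i, j)) (by simpa using hij)
  have h01 : ∀ᵐ x ∂μ, x ∈ A → ∀ i v, φ i (T (K • v) x) = 0 ∨ φ i (T (K • v) x) = 1 := by
    filter_upwards [ae_all_iff.2 hL, hg] with x hx hgx hxA i v
    apply coe_zero_cases ((hgx _).nn i)
    · exact (Finset.single_le_sum (fun j _ => (hgx _).nn j) (Finset.mem_univ i)).trans (hgx _).le_one
    · obtain ⟨c, hc⟩ : L i ∣ K := (Finset.dvd_prod_of_mem L (Finset.mem_univ i)).mul_right _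
      rw [hc, mul_smul]
      exact hx i hxA _
  let Z : Set X := ⋃ v, T (K • v) ⁻¹' A
  let B : ι → Set X := fun i => Z ∩ {x | φ i x = 1}
  let B' : ι → Set X := fun i => ⋃ v, T (K • v) ⁻¹' (B i)
  let e := Fintype.equivFin ι
  let C : Option ι → Set X := fun o => match o with
    | none => (⋃ i, B' i)ᶜ
    | some i => B' i \ ⋃ j, ⋃ (_ : e j < e i), B' j
  have hZm : MeasurableSet Z := MeasurableSet.iUnion fun v => (hmp _).measurable hA
  have hBm : ∀ i, MeasurableSet (B i) := fun i => hZm.inter (hm i (measurableSet_singleton 1))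
  have hB'm : ∀ i, MeasurableSet (B' i) := fun i =>
    MeasurableSet.iUnion fun v => (hmp _).measurable (hBm i)
  have hCm : ∀ o, MeasurableSet (C o) := by
    rintro (_ | i)
    · exact (MeasurableSet.iUnion hB'm).compl
    · exact (hB'm i).diff (MeasurableSet.iUnion fun j => MeasurableSet.iUnion fun _ => hB'm j)
  have hsat : ∀ (S : Set X) v x, T (K • v) x ∈ (⋃ v, T (K • v) ⁻¹' S) ↔ x ∈ ⋃ v, T (K • v) ⁻¹' S := by
    intro S v x
    simp only [Set.mem_iUnion, Set.mem_preimage, h.add_apply, ← smul_add]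
    constructor
    · rintro ⟨v', hv⟩; exact ⟨_, hv⟩
    · rintro ⟨v', hv⟩; exact ⟨v' - v, by simpa using hv⟩
  have hB'i : ∀ i v x, T (K • v) x ∈ B' i ↔ x ∈ B' i := fun i v x => hsat (B i) v x
  have hZi : ∀ v x, T (K • v) x ∈ Z ↔ x ∈ Z := fun v x => hsat A v x
  have hCi : ∀ o v x, T (K • v) x ∈ C o ↔ x ∈ C o := by
    rintro (_ | i) v x
    · simp only [C, Set.mem_compl_iff, Set.mem_iUnion, hB'i]
    · simp only [C, Set.mem_diff, Set.mem_iUnion, hB'i]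
  have hself : ∀ (S : Set X), S ⊆ ⋃ v, T (K • v) ⁻¹' S := by
    intro S x hx
    exact Set.mem_iUnion.2 ⟨0, by simpa [hT0] using hx⟩
  have hCdisj : ∀ o o', o ≠ o' → Disjoint (C o) (C o') := by
    rintro (_ | i) (_ | j) hne
    · exact absurd rfl hne
    · rw [Set.disjoint_left]
      intro x hx hx'
      exact hx (Set.mem_iUnion.2 ⟨j, hx'.1⟩)
    · rw [Set.disjoint_right]
      intro x hx hx'
      exact hx (Set.mem_iUnion.2 ⟨i, hx'.1⟩)
    · rw [Set.disjoint_left]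
      intro x hx hx'
      have hne' : e i ≠ e j := fun H => hne (by rw [e.injective H])
      rcases lt_or_gt_of_ne hne' with H | H
      · exact hx'.2 (Set.mem_iUnion.2 ⟨i, Set.mem_iUnion.2 ⟨H, hx.1⟩⟩)
      · exact hx.2 (Set.mem_iUnion.2 ⟨j, Set.mem_iUnion.2 ⟨H, hx'.1⟩⟩)
  have hCcov : ∀ x, ∃ o, x ∈ C o := by
    intro x
    by_cases hx : ∃ i, x ∈ B' i
    · have hne : (Finset.univ.filter fun i => x ∈ B' i).Nonempty := by
        obtain ⟨i, hi⟩ := hx; exact ⟨i, by simpa using hi⟩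
      obtain ⟨i, hi, hmin⟩ := Finset.exists_min_image _ e hne
      refine ⟨some i, by simpa using hi, ?_⟩
      intro H
      simp only [Set.mem_iUnion] at H
      obtain ⟨j, hj, hxj⟩ := H
      exact absurd (hmin j (by simpa using hxj)) (not_le.2 hj)
    · exact ⟨none, by simpa [C] using hx⟩
  have h01' : ∀ᵐ x ∂μ, ∀ u, T u x ∈ A → ∀ i v, φ i (T (K • v) (T u x)) = 0 ∨
      φ i (T (K • v) (T u x)) = 1 := h.orbit h01
  have hZ01 : ∀ᵐ x ∂μ, x ∈ Z → ∀ i, φ i x = 0 ∨ φ i x = 1 := by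
    filter_upwards [h01'] with x hx hxZ i
    obtain ⟨v, hv⟩ := Set.mem_iUnion.1 hxZ
    have := hx (K • v) hv i (-v)
    rw [h.add_apply] at this
    simpa [hT0] using this
  have hZ01' := h.orbit hZ01
  -- on the cell of index i, membership in A is governed by φ i
  have hcell : ∀ i, ∀ᵐ x ∂μ, x ∈ B' i → (x ∈ A ↔ φ i x = 0) := by
    intro i
    filter_upwards [hg, hZ01] with x hgx h1 hxB
    have hx0 : Good T A φ w x := by simpa [hT0] using hgx 0
    refine ⟨fun hxA => hx0.zero hxA i, fun hi => hx0.mem fun j => ?_⟩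
    obtain ⟨v, hvZ, hv1⟩ := Set.mem_iUnion.1 hxB
    have hxZ : x ∈ Z := (hZi v x).1 hvZ
    by_cases hij : i = j
    · rw [← hij]; exact hi
    refine (h1 hxZ j).resolve_right fun hj1 => ?_
    obtain ⟨α, β, hab⟩ := dt_span (w i) (w j) v K (hKd i j hij)
    have e1 : φ i (T (β • w j) x) = 1 := by
      rw [← orbit_inv h hgx i (β • w j) α, add_comm, ← hab, natCast_zsmul]
      exact hv1
    have e2 : φ j (T (β • w j) x) = 1 := by
      have := orbit_inv h hgx j 0 β
      rw [zero_add, hT0] at this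
      rw [this]; exact hj1
    have e3 := (hgx (β • w j)).le_one
    have e4 : ∑ l ∈ {i, j}, φ l (T (β • w j) x) ≤ ∑ l, φ l (T (β • w j) x) :=
      Finset.sum_le_sum_of_subset_of_nonneg (Finset.subset_univ _) fun l _ _ => (hgx _).nn l
    rw [Finset.sum_pair hij, e1, e2] at e4
    linarith
  have hnone : ∀ v, ∀ᵐ x ∂μ, x ∈ C none → x ∈ A → T (K • v) x ∈ A := by
    intro v
    filter_upwards [hg, hZ01'] with x hgx h1 hxC hxA
    refine (hgx _).mem fun i => ?_
    have hZ' : T (K • v) x ∈ Z := (hZi v x).2 (hself A hxA)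
    refine (h1 (K • v) hZ' i).resolve_right fun h2 => ?_
    have : T (K • v) x ∈ B' i := hself (B i) ⟨hZ', h2⟩
    exact hxC (Set.mem_iUnion.2 ⟨i, (hB'i i v x).1 this⟩)
  have himg : ∀ (v : ℤ × ℤ) (S : Set X) y, y ∈ T (-v) '' S ↔ T v y ∈ S := by
    intro v S y
    constructor
    · rintro ⟨x, hx, rfl⟩; rw [h.add_apply]; simpa [hT0] using hx
    · intro hy; exact ⟨_, hy, by rw [h.add_apply]; simp [hT0]⟩
  have hper : ∀ o, ∃ v : ℤ × ℤ, v ≠ 0 ∧ T v '' (A ∩ C o) =ᵐ[μ] (A ∩ C o : Set X) := by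
    rintro (_ | i)
    · refine ⟨-(K • (1, 0)), neg_ne_zero.2 (smul_ne_zero hKpos.ne' (by simp)), ?_⟩
      refine Filter.eventuallyEq_set.2 ?_
      filter_upwards [hnone (1, 0), h.orbit (hnone (-(1, 0)))] with x a b
      rw [himg, Set.mem_inter_iff, Set.mem_inter_iff]
      refine (and_congr Iff.rfl (hCi none (1, 0) x)).trans ?_
      refine and_congr_left fun hxC => ⟨fun hx => ?_, a hxC⟩
      have := b (K • (1, 0)) ((hCi none (1, 0) x).2 hxC) hx
      rw [h.add_apply] at this
      have h00 : T (0, 0) = id := hT0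
      simpa [h00] using this
    · refine ⟨-(K • w i), neg_ne_zero.2 (smul_ne_zero hKpos.ne' (hw i)), ?_⟩
      refine Filter.eventuallyEq_set.2 ?_
      filter_upwards [hcell i, h.orbit (hcell i), hg] with x a b hgx
      rw [himg, Set.mem_inter_iff, Set.mem_inter_iff]
      refine (and_congr Iff.rfl (hCi (some i) (w i) x)).trans ?_
      refine and_congr_left fun hxC => ?_
      rw [a hxC.1, b _ ((hB'i i _ x).2 hxC.1)]
      have := orbit_inv h hgx i 0 K
      rw [zero_add, hT0, natCast_zsmul] at this
      rw [this]; rfl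
  let e' := Fintype.equivFin (Option ι)
  refine ⟨Fintype.card (Option ι), fun l => A ∩ C (e'.symm l), fun l => hA.inter (hCm _), ?_, ?_,
    fun l => hper _⟩
  · intro l l' hl
    exact (hCdisj _ _ fun H => hl (e'.symm.injective H)).mono Set.inter_subset_right
      Set.inter_subset_right
  · ext x
    simp only [Set.mem_iUnion, Set.mem_inter_iff]
    constructor
    · rintro ⟨l, hx, _⟩; exact hx
    · intro hx
      obtain ⟨o, ho⟩ := hCcov x
      exact ⟨e' o, hx, by simpa using ho⟩
end

section
/- Suppose F, D and E are subsets of ℤ² such that F is finite and F ⊕ D = E. If D is 1-periodic and E is periodic, then there exists a periodic set D' ⊆ ℤ² such that F ⊕ D' = E. -/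
/-- A set `E ⊆ ℤ²` is periodic if `E + Λ = E` for some finite index subgroup `Λ ⊆ ℤ²`. -/
def IsPeriodicSet (E : Set (ℤ × ℤ)) : Prop :=
  ∃ Λ : AddSubgroup (ℤ × ℤ), Λ.FiniteIndex ∧ ∀ h ∈ Λ, ∀ x : ℤ × ℤ, x + h ∈ E ↔ x ∈ E

/-- A set `E ⊆ ℤ²` is 1-periodic if `E + h = E` for some nonzero `h ∈ ℤ²`. -/
def IsOnePeriodicSet (E : Set (ℤ × ℤ)) : Prop :=
  ∃ h : ℤ × ℤ, h ≠ 0 ∧ ∀ x : ℤ × ℤ, x + h ∈ E ↔ x ∈ E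


/-- the stabilizer of a set under translation -/
def stabAux (D : Set (ℤ × ℤ)) : AddSubgroup (ℤ × ℤ) where
  carrier := {g | ∀ x, x + g ∈ D ↔ x ∈ D}
  zero_mem' := by intro x; simp
  add_mem' := by
    intro a b ha hb x
    rw [← add_assoc, hb, ha]
  neg_mem' := by
    intro a ha x
    have := ha (x + -a)
    rw [neg_add_cancel_right] at this
    exact this.symm

theorem mem_stabAux {D : Set (ℤ × ℤ)} {g : ℤ × ℤ} :
    g ∈ stabAux D ↔ ∀ x, x + g ∈ D ↔ x ∈ D := Iff.rfl

theorem finiteIndex_aux (Λ : AddSubgroup (ℤ × ℤ)) (N : ℕ) (hN : 0 < N)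
    (h : ∀ x : ℤ × ℤ, (N : ℤ) • x ∈ Λ) : Λ.FiniteIndex := by
  haveI : NeZero N := ⟨hN.ne'⟩
  let φ : ℤ × ℤ →+ ZMod N × ZMod N :=
    AddMonoidHom.prodMap (Int.castAddHom (ZMod N)) (Int.castAddHom (ZMod N))
  have hle : φ.ker ≤ Λ := by
    rintro ⟨s, t⟩ hx
    rw [AddMonoidHom.mem_ker] at hx
    have h1 : (s : ZMod N) = 0 := congrArg Prod.fst hx
    have h2 : (t : ZMod N) = 0 := congrArg Prod.snd hx
    rw [ZMod.intCast_zmod_eq_zero_iff_dvd] at h1 h2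
    obtain ⟨s', rfl⟩ := h1
    obtain ⟨t', rfl⟩ := h2
    exact h (s', t')
  haveI : φ.ker.FiniteIndex := AddSubgroup.finiteIndex_ker φ
  exact AddSubgroup.finiteIndex_of_le hle

theorem tile_iff (F C E : Set (ℤ × ℤ)) : TileOplus F C E ↔
    ∀ e, ((∃ f ∈ F, e - f ∈ C) → e ∈ E) ∧ (e ∈ E → ∃! f, f ∈ F ∧ e - f ∈ C) := by
  constructor
  · rintro ⟨h1, h2⟩ e
    refine ⟨?_, ?_⟩
    · rintro ⟨f, hf, hc⟩
      have := h1 f hf _ hc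
      rwa [add_sub_cancel] at this
    · intro he
      obtain ⟨p, ⟨hp1, hp2, hp3⟩, hu⟩ := h2 e he
      refine ⟨p.1, ⟨hp1, ?_⟩, ?_⟩
      · rw [← hp3, add_sub_cancel_left]; exact hp2
      · rintro f ⟨hf, hc⟩
        have := hu (f, e - f) ⟨hf, hc, add_sub_cancel _ _⟩
        rw [← this]
  · intro h
    refine ⟨?_, ?_⟩
    · intro f hf c hc
      exact (h _).1 ⟨f, hf, by rwa [add_sub_cancel_left]⟩
    · intro e he
      obtain ⟨f, ⟨hf, hc⟩, hu⟩ := (h e).2 he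
      refine ⟨(f, e - f), ⟨hf, hc, add_sub_cancel _ _⟩, ?_⟩
      rintro ⟨g, c⟩ ⟨hg, hc', hs⟩
      simp only at hg hc' hs
      subst hs
      have := hu g ⟨hg, by rwa [add_sub_cancel_left]⟩
      subst this
      simp

theorem core_aux (F D E : Set (ℤ × ℤ)) (hF : F.Finite) (hFD : TileOplus F D E)
    (n : ℕ) (hn : 0 < n) (hE : ∀ z x : ℤ × ℤ, x + (n : ℤ) • z ∈ E ↔ x ∈ E)
    (h u : ℤ × ℤ) (hD : h ∈ stabAux D)
    (L : ℤ × ℤ →+ ℤ) (hLh : L h = 0) (hLu : 0 < L u)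
    (hR : ∀ M : ℤ, ∃ R : Set (ℤ × ℤ), R.Finite ∧
      ∀ x, 0 ≤ L x → L x < M → ∃ j : ℤ, x - j • h ∈ R)
    (hfin : ∀ (q : ℤ) (x : ℤ × ℤ), ∃ i j : ℤ, (L u * q) • x = i • h + j • (q • u)) :
    ∃ D' : Set (ℤ × ℤ), IsPeriodicSet D' ∧ TileOplus F D' E := by
  obtain ⟨B, hB0, hB⟩ : ∃ B : ℤ, 0 ≤ B ∧ ∀ f ∈ F, |L f| ≤ B := by
    obtain ⟨B, hB⟩ := (hF.image (fun f => |L f|)).bddAbove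
    exact ⟨max B 0, le_max_right _ _, fun f hf =>
      le_trans (hB ⟨f, hf, rfl⟩) (le_max_left _ _)⟩
  obtain ⟨M, hM⟩ : ∃ M : ℤ, M = 2 * B + 1 := ⟨_, rfl⟩
  have hM0 : 0 < M := by omega
  obtain ⟨R, hRf, hR⟩ := hR M
  have hn' : (0 : ℤ) < n := by exact_mod_cast hn
  -- pigeonhole
  obtain ⟨k₁, k₂, hk, hkeq⟩ : ∃ k₁ k₂ : ℤ, k₁ < k₂ ∧ ∀ x ∈ R,
      (x + (k₁ * (n * M)) • u ∈ D ↔ x + (k₂ * (n * M)) • u ∈ D) := by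
    haveI : Finite R := hRf
    obtain ⟨k₁, k₂, hne, heq⟩ := Finite.exists_ne_map_eq_of_infinite
      (fun (k : ℤ) (x : R) => ((x : ℤ × ℤ) + (k * (n * M)) • u ∈ D : Prop))
    have key : ∀ x ∈ R, (x + (k₁ * (n * M)) • u ∈ D ↔ x + (k₂ * (n * M)) • u ∈ D) :=
      fun x hx => iff_of_eq (congrFun heq ⟨x, hx⟩)
    rcases lt_or_gt_of_ne hne with hlt | hlt
    · exact ⟨k₁, k₂, hlt, key⟩
    · exact ⟨k₂, k₁, hlt, fun x hx => (key x hx).symm⟩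
  obtain ⟨q, hq⟩ : ∃ q : ℤ, q = (k₂ - k₁) * (n * M) := ⟨_, rfl⟩
  have hqM : M ≤ q := by
    rw [hq]
    have h1 : 1 ≤ k₂ - k₁ := by omega
    have h2 : 1 ≤ (n : ℤ) := hn'
    nlinarith [mul_pos hn' hM0]
  have hq0 : 0 < q := by omega
  obtain ⟨W, hW⟩ : ∃ W : ℤ, W = L u * q := ⟨_, rfl⟩
  have hWM : M ≤ W := by rw [hW]; nlinarith
  have hW0 : 0 < W := by omega
  have hLw : ∀ j : ℤ, L (j • q • u) = j * W := by
    intro j; rw [map_zsmul, map_zsmul, hW, smul_eq_mul, smul_eq_mul]; ring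
  obtain ⟨c, hc⟩ : ∃ c : ℤ, c = L ((k₁ * (n * M)) • u) := ⟨_, rfl⟩
  have hDj : ∀ (j : ℤ) x, x + j • h ∈ D ↔ x ∈ D := fun j =>
    mem_stabAux.1 ((stabAux D).zsmul_mem hD j)
  -- the overlap
  have hov : ∀ x, c ≤ L x → L x < c + M → (x ∈ D ↔ x + q • u ∈ D) := by
    intro x h1 h2
    obtain ⟨j, hj⟩ := hR (x - (k₁ * (n * M)) • u)
      (by rw [map_sub, ← hc]; omega) (by rw [map_sub, ← hc]; omega)
    have := hkeq _ hj
    rw [← hDj (-j) x, ← hDj (-j) (x + q • u)]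
    convert this using 2
    · module
    · rw [hq]; module
  let D' : Set (ℤ × ℤ) := {x | x - ((L x - c) / W) • (q • u) ∈ D}
  have hD'h : h ∈ stabAux D' := by
    intro x
    change x + h - ((L (x + h) - c) / W) • (q • u) ∈ D ↔ x - ((L x - c) / W) • (q • u) ∈ D
    rw [map_add, hLh, add_zero, add_sub_right_comm]
    exact hD _
  have hD'w : q • u ∈ stabAux D' := by
    intro x
    change x + q • u - ((L (x + q • u) - c) / W) • (q • u) ∈ D ↔
      x - ((L x - c) / W) • (q • u) ∈ D
    have e1 : L (q • u) = W := by simpa using hLw 1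
    have e2 : (L (x + q • u) - c) / W = (L x - c) / W + 1 := by
      rw [map_add, e1, add_sub_right_comm, Int.add_ediv_of_dvd_right (dvd_refl W),
        Int.ediv_self hW0.ne']
    rw [e2]
    have : x + q • u - ((L x - c) / W + 1) • q • u = x - ((L x - c) / W) • q • u := by
      module
    rw [this]
  -- D' agrees with D on a long strip
  have hagree : ∀ x, c ≤ L x → L x < c + W + M → (x ∈ D' ↔ x ∈ D) := by
    intro x h1 h2
    change x - ((L x - c) / W) • (q • u) ∈ D ↔ x ∈ D
    by_cases h3 : L x < c + W
    · have : (L x - c) / W = 0 := Int.ediv_eq_zero_of_lt (by omega) (by omega)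
      rw [this]; simp
    · have : (L x - c) / W = 1 := by
        rw [Int.ediv_eq_iff_of_pos hW0]
        constructor <;> linarith
      rw [this, one_zsmul]
      have e1 : L (q • u) = W := by simpa using hLw 1
      have := hov (x - q • u) (by rw [map_sub, e1]; omega) (by rw [map_sub, e1]; omega)
      rw [this, sub_add_cancel]
  refine ⟨D', ⟨stabAux D', ?_, fun g hg => hg⟩, ?_⟩
  · refine finiteIndex_aux _ W.toNat (by omega) ?_
    intro x
    obtain ⟨i, j, hij⟩ := hfin q x
    rw [Int.toNat_of_nonneg hW0.le, hW, hij]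
    exact add_mem (zsmul_mem hD'h i) (zsmul_mem hD'w j)
  · rw [tile_iff] at hFD ⊢
    intro e
    obtain ⟨j, hj⟩ : ∃ j : ℤ, j = -((L e - B - c) / W) := ⟨_, rfl⟩
    have hLe : L (e + j • q • u) - B - c = (L e - B - c) % W := by
      rw [map_add, hLw, hj, Int.emod_def]; ring
    have hb1 := Int.emod_nonneg (L e - B - c) hW0.ne'
    have hb2 := Int.emod_lt_of_pos (L e - B - c) hW0
    have hEe : e + j • q • u ∈ E ↔ e ∈ E := by
      rw [← hE ((j * ((k₂ - k₁) * M)) • u) e, hq]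
      have : (n : ℤ) • (j * ((k₂ - k₁) * M)) • u = j • ((k₂ - k₁) * (n * M)) • u := by
        module
      rw [this]
    have hDf : ∀ f ∈ F, (e - f ∈ D' ↔ e + j • q • u - f ∈ D) := by
      intro f hf
      have hBf := abs_le.1 (hB f hf)
      rw [← hagree _ (by rw [map_sub]; omega) (by rw [map_sub]; omega)]
      rw [add_sub_right_comm]
      exact (mem_stabAux.1 (zsmul_mem hD'w j) (e - f)).symm
    have hx := hFD (e + j • q • u)
    rw [hEe] at hx
    refine ⟨?_, ?_⟩
    · rintro ⟨f, hf, h'⟩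
      exact hx.1 ⟨f, hf, (hDf f hf).1 h'⟩
    · intro he
      obtain ⟨f, ⟨hf, h1⟩, h2⟩ := hx.2 he
      refine ⟨f, ⟨hf, (hDf f hf).2 h1⟩, ?_⟩
      rintro g ⟨hg, h3⟩
      exact h2 g ⟨hg, (hDf g hg).1 h3⟩

theorem bound_aux (a b s t M : ℤ) (ha : a ≠ 0) (h0 : 0 ≤ a * t - b * s)
    (h1 : a * t - b * s < M) (hs0 : 0 ≤ s) (hs : s < |a|) :
    -(M + |b| * |a|) ≤ t ∧ t ≤ M + |b| * |a| := by
  rw [← abs_le]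
  have h2 : 1 ≤ |a| := Int.one_le_abs ha
  have h3 : |t| ≤ |a * t| := by rw [abs_mul]; nlinarith [abs_nonneg t]
  have h4 : |a * t| ≤ |a * t - b * s| + |b * s| := by
    have := abs_add_le (a * t - b * s) (b * s)
    rwa [sub_add_cancel] at this
  have h5 : |b * s| ≤ |b| * |a| := by
    rw [abs_mul, abs_of_nonneg hs0]
    exact mul_le_mul_of_nonneg_left hs.le (abs_nonneg b)
  rw [abs_of_nonneg h0] at h4
  linarith

/-- If `F, D, E ⊆ ℤ²` with `F` finite and `F ⊕ D = E`, and `D` is 1-periodic while `E`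
is periodic, then there exists a periodic set `D' ⊆ ℤ²` with `F ⊕ D' = E`. -/
theorem periodic_tiling_of_onePeriodic (F D E : Set (ℤ × ℤ)) (hF : F.Finite)
    (hFD : TileOplus F D E) (hD : IsOnePeriodicSet D) (hE : IsPeriodicSet E) :
    ∃ D' : Set (ℤ × ℤ), IsPeriodicSet D' ∧ TileOplus F D' E := by
  obtain ⟨⟨a, b⟩, hne, hDh⟩ := hD
  obtain ⟨Λ, hΛ, hE⟩ := hE
  have hn : 0 < Λ.index := Nat.pos_of_ne_zero hΛ.index_ne_zero
  have hE' : ∀ z x : ℤ × ℤ, x + (Λ.index : ℤ) • z ∈ E ↔ x ∈ E := by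
    intro z x
    refine hE _ ?_ x
    rw [natCast_zsmul]
    exact Λ.nsmul_index_mem z
  by_cases ha : a = 0
  · have hb : b ≠ 0 := by
      rintro rfl; subst ha; exact hne rfl
    refine core_aux F D E hF hFD Λ.index hn hE' (a, b) (b, 0) hDh
      (b • AddMonoidHom.fst ℤ ℤ - a • AddMonoidHom.snd ℤ ℤ) ?_ ?_ ?_ ?_
    · simp; ring
    · simpa using mul_self_pos.2 hb
    · intro M
      refine ⟨Set.Icc (-(M + |a| * |b|)) (M + |a| * |b|) ×ˢ Set.Ico 0 |b|,
        (Set.finite_Icc _ _).prod (Set.finite_Ico _ _), ?_⟩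
      rintro ⟨s, t⟩ h0 h1
      simp at h0 h1
      refine ⟨t / b, ?_⟩
      have e1 : t - t / b * b = t % b := by rw [Int.emod_def]; ring
      have g1 : 0 ≤ t - t / b * b := by rw [e1]; exact Int.emod_nonneg _ hb
      have g2 : t - t / b * b < |b| := by rw [e1]; exact Int.emod_lt_abs _ hb
      have := bound_aux b a (t - t / b * b) (s - t / b * a) M hb
        (by linarith) (by linarith) g1 g2
      exact ⟨this, g1, g2⟩
    · rintro q ⟨s, t⟩
      refine ⟨b * q * t, b * s - a * t, ?_⟩
      ext <;> simp <;> ring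
  · refine core_aux F D E hF hFD Λ.index hn hE' (a, b) (0, a) hDh
      (a • AddMonoidHom.snd ℤ ℤ - b • AddMonoidHom.fst ℤ ℤ) ?_ ?_ ?_ ?_
    · simp; ring
    · simpa using mul_self_pos.2 ha
    · intro M
      refine ⟨Set.Ico 0 |a| ×ˢ Set.Icc (-(M + |b| * |a|)) (M + |b| * |a|),
        (Set.finite_Ico _ _).prod (Set.finite_Icc _ _), ?_⟩
      rintro ⟨s, t⟩ h0 h1
      simp at h0 h1
      refine ⟨s / a, ?_⟩
      have e1 : s - s / a * a = s % a := by rw [Int.emod_def]; ring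
      have g1 : 0 ≤ s - s / a * a := by rw [e1]; exact Int.emod_nonneg _ ha
      have g2 : s - s / a * a < |a| := by rw [e1]; exact Int.emod_lt_abs _ ha
      have := bound_aux a b (s - s / a * a) (t - s / a * b) M ha
        (by linarith) (by linarith) g1 g2
      exact ⟨⟨g1, g2⟩, this⟩
    · rintro q ⟨s, t⟩
      refine ⟨a * q * s, a * t - b * s, ?_⟩
      ext <;> simp <;> ring
end

section
/- Suppose F ⊆ ℤ² is finite and F ⊕ C = ℤ². If there exists a finite partition (C₁, …, C_m) of C such that each C_i is 1-periodic, then there exists a periodic set C' ⊆ ℤ² such that F ⊕ C' = ℤ². -/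
def dtt (v w : ℤ × ℤ) : ℤ := v.1 * w.2 - v.2 * w.1

def PerFun (g : ℤ × ℤ → ℤ) : Prop := ∃ n : ℤ, n ≠ 0 ∧ ∀ x y, g (x + n • y) = g x

lemma zsmul_per {g : ℤ × ℤ → ℤ} {v : ℤ × ℤ} (h : ∀ x, g (x + v) = g x) (k : ℤ) (x : ℤ × ℤ) :
    g (x + k • v) = g x := by
  induction k using Int.induction_on generalizing x with
  | zero => simp
  | succ i ih => rw [add_smul, one_smul, ← add_assoc, h, ih]
  | pred i ih =>
    rw [← h, sub_smul, one_smul, add_assoc, sub_add_cancel, ih]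

lemma per_of_two {g : ℤ × ℤ → ℤ} {v w : ℤ × ℤ} (hv : ∀ x, g (x + v) = g x)
    (hw : ∀ x, g (x + w) = g x) (hd : dtt v w ≠ 0) : PerFun g := by
  refine ⟨dtt v w, hd, fun x y => ?_⟩
  have : x + dtt v w • y = (x + (dtt y w) • v) + (dtt v y) • w := by
    ext <;> simp [dtt] <;> ring
  rw [this, zsmul_per hw, zsmul_per hv]

lemma per_of_diff {g : ℤ × ℤ → ℤ} {v w : ℤ × ℤ} (M : ℤ) (hM : ∀ x, |g x| ≤ M)
    (hv : ∀ x, g (x + v) = g x) (hd : dtt v w ≠ 0)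
    (hp : PerFun (fun x => g (x + w) - g x)) : PerFun g := by
  obtain ⟨n, hn, h⟩ := hp
  wlog hpos : 0 < n generalizing n
  · refine this (-n) (by omega) (fun x y => ?_) (by omega)
    rw [← h x (-y)]; simp
  -- R
  have key : ∀ x, g (x + n • w) - g x = 0 := by
    intro x
    have step : ∀ x : ℤ × ℤ, g (x + n • w + n • w) - g (x + n • w) = g (x + n • w) - g x := by
      intro x
      have h1 := zsmul_per (g := fun x => g (x + n • w) - g x) (v := w) (by
        intro x
        have := h x w
        simp only at this ⊢
        rw [add_right_comm x w]
        linarith) n x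
      simpa using h1
    have mult : ∀ j : ℕ, g (x + (j : ℤ) • (n • w)) = g x + j * (g (x + n • w) - g x) ∧
        g (x + (j : ℤ) • (n • w) + n • w) - g (x + (j : ℤ) • (n • w)) = g (x + n • w) - g x := by
      intro j
      induction j with
      | zero => simp
      | succ j ih =>
        have e : x + ((j + 1 : ℕ) : ℤ) • (n • w) = x + (j : ℤ) • (n • w) + n • w := by
          push_cast; rw [add_smul, one_smul, add_assoc]
        rw [e, step]
        refine ⟨?_, ih.2⟩
        push_cast
        linarith [ih.1, ih.2]
    set R := g (x + n • w) - g x with hR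
    by_contra hne
    have hM0 : 0 ≤ M := (abs_nonneg _).trans (hM x)
    have h1 := (mult (2 * M + 1).toNat).1
    rw [Int.toNat_of_nonneg (by omega)] at h1
    have h2 := abs_le.1 (hM x)
    have h3 := abs_le.1 (hM (x + (2 * M + 1) • n • w))
    rw [h1] at h3
    rcases lt_or_gt_of_ne hne with hlt | hgt
    · nlinarith
    · nlinarith
  refine per_of_two (v := v) (w := n • w) hv (fun x => by linarith [key x]) ?_
  have : dtt v (n • w) = n * dtt v w := by simp [dtt]; ring
  rw [this]; exact mul_ne_zero hn hd

lemma per_of_sum (v : ℤ × ℤ) (S : Finset (ℤ × ℤ)) (hS : ∀ w ∈ S, dtt v w ≠ 0) :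
    ∀ (f : ℤ × ℤ → ℤ × ℤ → ℤ) (_ : ∀ w ∈ S, ∀ x, f w (x + w) = f w x)
      (g : ℤ × ℤ → ℤ) (M : ℤ) (_ : ∀ x, |g x| ≤ M) (_ : ∀ x, g (x + v) = g x)
      (_ : PerFun (fun x => g x + ∑ w ∈ S, f w x)), PerFun g := by
  induction S using Finset.induction_on with
  | empty => intro f _ g M _ _ h; simpa using h
  | insert w S hw ih =>
    intro f hf g M hM hv hp
    have hdw := hS w (Finset.mem_insert_self _ _)
    refine per_of_diff M hM hv hdw ?_
    refine ih (fun w' h' => hS w' (Finset.mem_insert_of_mem h')) (fun w' x => f w' (x + w) - f w' x)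
      ?_ _ (2 * M) ?_ ?_ ?_
    · intro w' h' x
      have := hf w' (Finset.mem_insert_of_mem h')
      rw [add_right_comm, this, this]
    · intro x
      have h1 := abs_le.1 (hM x)
      have h2 := abs_le.1 (hM (x + w))
      rw [abs_le]; constructor <;> linarith
    · intro x
      rw [add_right_comm, hv, hv]
    · obtain ⟨n, hn, h⟩ := hp
      refine ⟨n, hn, fun x y => ?_⟩
      have h1 := h x y
      have h2 := h (x + w) y
      simp only [Finset.sum_insert hw, Finset.sum_sub_distrib] at h1 h2 ⊢
      have h3 := hf w (Finset.mem_insert_self _ _)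
      rw [h3] at h2
      rw [add_right_comm x w, h3] at h2
      linarith

lemma splice (F : Finset (ℤ × ℤ)) (u : ℤ × ℤ → ℤ) (v : ℤ × ℤ) (hv0 : v ≠ 0) (M : ℕ)
    (h0 : ∀ x, 0 ≤ u x) (hM : ∀ x, u x ≤ M) (hv : ∀ x, u (x + v) = u x)
    (hp : PerFun (fun x => ∑ a ∈ F, u (x - a))) :
    ∃ u' : ℤ × ℤ → ℤ, PerFun u' ∧ (∀ x, 0 ≤ u' x) ∧
      ∀ x, ∑ a ∈ F, u' (x - a) = ∑ a ∈ F, u (x - a) := by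
  obtain ⟨n, hn, hper⟩ := hp
  set s : ℤ := v.1 * v.1 + v.2 * v.2 with hs
  have hspos : 0 < s := by
    have : v.1 ≠ 0 ∨ v.2 ≠ 0 := by
      by_contra! hc
      exact hv0 (Prod.ext hc.1 hc.2)
    rcases this with h | h
    · nlinarith [mul_self_pos.2 h, mul_self_nonneg v.2]
    · nlinarith [mul_self_pos.2 h, mul_self_nonneg v.1]
  let lam : ℤ × ℤ → ℤ := fun x => dtt v x
  let mu : ℤ × ℤ → ℤ := fun x => v.1 * x.1 + v.2 * x.2
  let w : ℤ × ℤ := (-v.2, v.1)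
  have lam_add : ∀ x y, lam (x + y) = lam x + lam y := by intro x y; simp [lam, dtt]; ring
  have lam_sub : ∀ x y, lam (x - y) = lam x - lam y := by intro x y; simp [lam, dtt]; ring
  have lam_smul : ∀ (k : ℤ) y, lam (k • y) = k * lam y := by intro x y; simp [lam, dtt]; ring
  have mu_sub : ∀ x y, mu (x - y) = mu x - mu y := by intro x y; simp [mu]; ring
  have mu_smul : ∀ (k : ℤ) y, mu (k • y) = k * mu y := by intro x y; simp [mu]; ring
  have lam_v : lam v = 0 := by simp [lam, dtt]; ring
  have mu_v : mu v = s := by simp [mu, hs]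
  have lam_w : lam w = s := by simp [lam, dtt, w, hs]
  obtain ⟨B, hB0, hB⟩ : ∃ B : ℤ, 0 ≤ B ∧ ∀ a ∈ F, |lam a| ≤ B :=
    ⟨∑ a ∈ F, |lam a|, Finset.sum_nonneg (fun _ _ => abs_nonneg _), fun a ha =>
      Finset.single_le_sum (f := fun a => |lam a|) (fun _ _ => abs_nonneg _) ha⟩
  set W := 2 * B with hW
  set m : ℤ := n * n * (W + 1) with hm
  have hnn : 0 < n * n := mul_self_pos.2 hn
  have hmW : W < m := by nlinarith
  -- the finite set of representatives
  let R : Set (ℤ × ℤ) := {x | lam x ∈ Set.Icc 0 W ∧ mu x ∈ Set.Ico 0 s}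
  have hRfin : R.Finite := by
    refine Set.Finite.of_finite_image (f := fun x => (lam x, mu x))
      (((Set.finite_Icc (0:ℤ) W).prod (Set.finite_Ico (0:ℤ) s)).subset ?_) ?_
    · rintro _ ⟨x, hx, rfl⟩; exact hx
    · intro x _ y _ hxy
      simp only [Prod.mk.injEq, lam, mu, dtt] at hxy
      obtain ⟨e1, e2⟩ := hxy
      ext
      · have : s * (x.1 - y.1) = 0 := by
          rw [hs]; linear_combination (-v.2) * e1 + v.1 * e2
        rcases mul_eq_zero.1 this with h | h <;> omega
      · have : s * (x.2 - y.2) = 0 := by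
          rw [hs]; linear_combination (v.1) * e1 + v.2 * e2
        rcases mul_eq_zero.1 this with h | h <;> omega
  have : Finite R := hRfin
  let Φ : ℕ → (R → Fin (M + 1)) := fun k x =>
    ⟨(u (x.1 + ((k : ℤ) * m) • w)).toNat, by have := hM (x.1 + ((k : ℤ) * m) • w); omega⟩
  obtain ⟨k1, k2, hlt, hΦ⟩ : ∃ k1 k2 : ℕ, k1 < k2 ∧ Φ k1 = Φ k2 := by
    obtain ⟨a, b, hab, e⟩ := Finite.exists_ne_map_eq_of_infinite Φ
    rcases lt_or_gt_of_ne hab with h | h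
    · exact ⟨a, b, h, e⟩
    · exact ⟨b, a, h, e.symm⟩
  have hstrip : ∀ x, 0 ≤ lam x → lam x ≤ W →
      u (x + ((k1 : ℤ) * m) • w) = u (x + ((k2 : ℤ) * m) • w) := by
    intro x hx0 hxW
    set t := mu x / s
    have hr : x - t • v ∈ R := by
      refine ⟨?_, ?_⟩
      · rw [lam_sub, lam_smul, lam_v]; simpa using ⟨hx0, hxW⟩
      · rw [mu_sub, mu_smul, mu_v]
        have h1 := Int.emod_nonneg (mu x) hspos.ne'
        have h2 := Int.emod_lt_of_pos (mu x) hspos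
        have h3 := Int.emod_add_mul_ediv (mu x) s
        constructor <;> nlinarith
    have e := congrArg Fin.val (congrFun hΦ ⟨_, hr⟩)
    simp only [Φ] at e
    have e' : u (x - t • v + ((k1 : ℤ) * m) • w) = u (x - t • v + ((k2 : ℤ) * m) • w) := by
      have a1 := h0 (x - t • v + ((k1 : ℤ) * m) • w)
      have a2 := h0 (x - t • v + ((k2 : ℤ) * m) • w)
      omega
    rw [← zsmul_per hv t, ← zsmul_per hv t (x - t • v + _)] at e'
    convert e' using 2 <;> abel
  set d : ℤ := (k2 : ℤ) - k1 with hd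
  have hd1 : 1 ≤ d := by omega
  set z : ℤ × ℤ := (d * m) • w with hz
  set c : ℤ := (k1 : ℤ) * m * s with hc
  have lam_z : lam z = d * m * s := by rw [hz, lam_smul, lam_w]
  set Z := lam z with hZ
  have hm0 : 0 < m := by omega
  have hZW : W < Z := by
    rw [lam_z]
    have : m ≤ d * m := by nlinarith
    nlinarith
  have hZ0 : 0 < Z := by omega
  have hloc : ∀ x, c ≤ lam x → lam x ≤ c + W → u (x + z) = u x := by
    intro x h1 h2
    have e := hstrip (x - ((k1 : ℤ) * m) • w) (by rw [lam_sub, lam_smul, lam_w]; omega)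
      (by rw [lam_sub, lam_smul, lam_w]; omega)
    rw [sub_add_cancel] at e
    rw [e]
    congr 1
    rw [hz, hd, sub_mul, sub_smul]; abel
  let u' : ℤ × ℤ → ℤ := fun x => u (x - ((lam x - c) / Z) • z)
  have hu'v : ∀ x, u' (x + v) = u' x := by
    intro x
    simp only [u']
    rw [lam_add, lam_v, add_zero, add_sub_right_comm, hv]
  have hu'z : ∀ x, u' (x + z) = u' x := by
    intro x
    simp only [u']
    rw [lam_add, ← hZ, show lam x + Z - c = (lam x - c) + Z by ring,
      Int.add_ediv_of_dvd_right (dvd_refl Z), Int.ediv_self hZ0.ne', add_smul, one_smul]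
    congr 1; abel
  have hagree : ∀ x, c ≤ lam x → lam x < c + Z + W → u' x = u x := by
    intro x h1 h2
    simp only [u']
    by_cases h : lam x < c + Z
    · rw [Int.ediv_eq_zero_of_lt (by omega) (by omega)]; simp
    · have : (lam x - c) / Z = 1 := by
        rw [Int.ediv_eq_iff_of_pos hZ0]
        constructor <;> linarith
      rw [this, one_smul]
      have := hloc (x - z) (by rw [lam_sub]; omega) (by rw [lam_sub]; omega)
      rw [sub_add_cancel] at this
      exact this.symm
  refine ⟨u', per_of_two hu'v hu'z hZ0.ne', fun x => h0 _, fun x => ?_⟩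
  -- shift x
  set j := (lam x - (c + B)) / Z with hj
  set y := x - j • z with hy
  have hly : lam y = lam x - j * Z := by rw [hy, lam_sub, lam_smul]
  have h1 := Int.emod_nonneg (lam x - (c + B)) hZ0.ne'
  have h2 := Int.emod_lt_of_pos (lam x - (c + B)) hZ0
  have h3 := Int.emod_add_mul_ediv (lam x - (c + B)) Z
  rw [← hj] at h3
  have hy1 : c + B ≤ lam y := by nlinarith
  have hy2 : lam y < c + B + Z := by nlinarith
  have e1 : ∑ a ∈ F, u' (x - a) = ∑ a ∈ F, u' (y - a) := by
    refine Finset.sum_congr rfl fun a _ => ?_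
    rw [← zsmul_per hu'z j (y - a)]
    congr 1; rw [hy]; abel
  have e2 : ∑ a ∈ F, u (x - a) = ∑ a ∈ F, u (y - a) := by
    have := hper y ((n * (W + 1) * j * d) • w)
    simp only at this
    rw [← this]
    have : y + n • (n * (W + 1) * j * d) • w = x := by
      rw [hy, hz, smul_smul, smul_smul, hm,
        show n * (n * (W + 1) * j * d) = j * (d * (n * n * (W + 1))) by ring, sub_add_cancel]
    rw [this]
  rw [e1, e2]
  refine Finset.sum_congr rfl fun a ha => ?_
  have := abs_le.1 (hB a ha)
  apply hagree <;> rw [lam_sub] <;> omega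

lemma exists_dirs {m : ℕ} (h : Fin m → ℤ × ℤ) (h0 : ∀ i, h i ≠ 0) :
    ∃ k : Fin m → ℤ, (∀ i, k i • h i ≠ 0) ∧
      ∀ i j, dtt (k i • h i) (k j • h j) = 0 → k i • h i = k j • h j := by
  set t : ℤ := 1 + ∑ i, |(h i).1| with ht
  have hlt : ∀ i, |(h i).1| < t := fun i => by
    have := Finset.single_le_sum (f := fun i => |(h i).1|) (fun _ _ => abs_nonneg _)
      (Finset.mem_univ i)
    omega
  let l : Fin m → ℤ := fun i => (h i).1 + t * (h i).2
  have hl : ∀ i, l i ≠ 0 := by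
    intro i hi
    simp only [l] at hi
    have h1 := hlt i
    have h2 : (h i).1 = 0 := by
      apply Int.eq_zero_of_abs_lt_dvd (m := t) _ h1
      exact ⟨-(h i).2, by linarith⟩
    have ht0 : t ≠ 0 := by have := abs_nonneg (h i).1; omega
    have h3 : (h i).2 = 0 := by
      rw [h2, zero_add] at hi
      exact (mul_eq_zero.1 hi).resolve_left ht0
    exact h0 i (Prod.ext h2 h3)
  let k : Fin m → ℤ := fun i => ∏ j ∈ Finset.univ.erase i, l j
  have hk : ∀ i, k i * l i = ∏ j, l j := fun i => Finset.prod_erase_mul _ _ (Finset.mem_univ i)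
  have hL : ∏ j, l j ≠ 0 := Finset.prod_ne_zero_iff.2 fun i _ => hl i
  refine ⟨k, fun i => smul_ne_zero (Finset.prod_ne_zero_iff.2 fun i _ => hl i) (h0 i), ?_⟩
  intro i j hij
  have e1 := hk i
  have e2 := hk j
  set L := ∏ j, l j
  simp only [l, dtt, Prod.smul_fst, Prod.smul_snd, smul_eq_mul] at e1 e2 hij
  ext
  · simp only [Prod.smul_fst, smul_eq_mul]
    apply mul_left_cancel₀ hL
    linear_combination (-(k i * (h i).1)) * e2 + (k j * (h j).1) * e1 + t * hij
  · simp only [Prod.smul_snd, smul_eq_mul]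
    apply mul_left_cancel₀ hL
    linear_combination (-(k i * (h i).2)) * e2 + (k j * (h j).2) * e1 - hij

open Classical in
lemma tile_iff_s5 (F : Finset (ℤ × ℤ)) (C : Set (ℤ × ℤ)) :
    TileOplus F C Set.univ ↔ ∀ x, ∑ a ∈ F, (if x - a ∈ C then (1 : ℤ) else 0) = 1 := by
  have key : ∀ x, (∑ a ∈ F, (if x - a ∈ C then (1 : ℤ) else 0) = 1) ↔
      ∃! p : (ℤ × ℤ) × (ℤ × ℤ), p.1 ∈ (F : Set (ℤ × ℤ)) ∧ p.2 ∈ C ∧ p.1 + p.2 = x := by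
    intro x
    rw [Finset.sum_boole]
    norm_cast
    rw [Finset.card_eq_one]
    constructor
    · rintro ⟨a, ha⟩
      have hm : ∀ b, (b ∈ F ∧ x - b ∈ C) ↔ b = a := fun b => by
        have := congrArg (b ∈ ·) ha
        simpa using this
      have h1 := (hm a).2 rfl
      refine ⟨(a, x - a), ⟨h1.1, h1.2, by simp⟩, ?_⟩
      rintro ⟨b, c⟩ ⟨hb, hc, rfl⟩
      have : b = a := (hm b).1 ⟨hb, by simpa using hc⟩
      subst this; simp
    · rintro ⟨⟨a, c⟩, ⟨ha, hc, rfl⟩, hu⟩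
      refine ⟨a, ?_⟩
      ext b
      simp only [Finset.mem_filter, Finset.mem_singleton]
      constructor
      · rintro ⟨hb, hb'⟩
        have := hu (b, a + c - b) ⟨hb, hb', by simp⟩
        exact congrArg Prod.fst this
      · rintro rfl; exact ⟨ha, by simpa using hc⟩
  simp only [key]
  simp [TileOplus]

lemma perFun_sum {ι : Type*} (S : Finset ι) (f : ι → ℤ × ℤ → ℤ) (h : ∀ i ∈ S, PerFun (f i)) :
    PerFun (fun x => ∑ i ∈ S, f i x) := by
  classical
  induction S using Finset.induction_on with
  | empty => exact ⟨1, by simp, by simp⟩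
  | insert i S hi ih =>
    obtain ⟨n, hn, h1⟩ := ih fun j hj => h j (Finset.mem_insert_of_mem hj)
    obtain ⟨n', hn', h2⟩ := h i (Finset.mem_insert_self _ _)
    refine ⟨n * n', mul_ne_zero hn hn', fun x y => ?_⟩
    simp only [Finset.sum_insert hi]
    have a1 := h1 x (n' • y)
    have a2 := h2 x (n • y)
    rw [smul_smul] at a1 a2
    rw [mul_comm n' n] at a2
    simp only at a1
    rw [a1, a2]

lemma finIdx (n : ℤ) (hn : n ≠ 0) :
    (AddSubgroup.map (zsmulAddGroupHom n) (⊤ : AddSubgroup (ℤ × ℤ))).FiniteIndex := by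
  have : AddSubgroup.map (zsmulAddGroupHom n) (⊤ : AddSubgroup (ℤ × ℤ)) =
      (AddSubgroup.zmultiples n).prod (AddSubgroup.zmultiples n) := by
    ext ⟨a, b⟩
    simp only [AddSubgroup.mem_map, AddSubgroup.mem_top, true_and, AddSubgroup.mem_prod,
      Int.mem_zmultiples_iff]
    constructor
    · rintro ⟨y, hy⟩
      simp only [zsmulAddGroupHom_apply, Prod.ext_iff] at hy
      exact ⟨⟨y.1, by simpa using hy.1.symm⟩, ⟨y.2, by simpa using hy.2.symm⟩⟩
    · rintro ⟨⟨p, rfl⟩, ⟨q, rfl⟩⟩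
      exact ⟨(p, q), by simp⟩
  rw [this]
  constructor
  rw [AddSubgroup.index_prod, Int.index_zmultiples]
  simpa using hn

/-- If `F ⊆ ℤ²` is finite, `F ⊕ C = ℤ²`, and `C` admits a finite partition
`(C₁, …, C_m)` into 1-periodic sets, then there is a periodic set `C' ⊆ ℤ²` with
`F ⊕ C' = ℤ²`. -/
theorem periodic_tiling_of_weaklyPeriodic_tiling (F C : Set (ℤ × ℤ)) (hF : F.Finite)
    (hFC : TileOplus F C Set.univ)
    (m : ℕ) (Cs : Fin m → Set (ℤ × ℤ))
    (hdisj : ∀ i j, i ≠ j → Disjoint (Cs i) (Cs j))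
    (hcov : (⋃ i, Cs i) = C)
    (h1p : ∀ i, IsOnePeriodicSet (Cs i)) :
    ∃ C' : Set (ℤ × ℤ), IsPeriodicSet C' ∧ TileOplus F C' Set.univ := by
  classical
  obtain ⟨F, rfl⟩ : ∃ G : Finset (ℤ × ℤ), F = (G : Set (ℤ × ℤ)) := ⟨hF.toFinset, by simp⟩
  rw [tile_iff_s5] at hFC
  choose h hh0 hh using h1p
  obtain ⟨k, hk0, hk⟩ := exists_dirs h hh0
  set P : Fin m → ℤ × ℤ := fun i => k i • h i with hP
  let χ : Fin m → ℤ × ℤ → ℤ := fun i x => if x ∈ Cs i then 1 else 0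
  have hχP : ∀ i x, χ i (x + P i) = χ i x := by
    intro i x
    refine zsmul_per (g := χ i) (fun x => ?_) (k i) x
    simp only [χ, hh i x]
  have hχsum : ∀ x, ∑ i, χ i x = if x ∈ C then 1 else 0 := by
    intro x
    simp only [χ]
    split_ifs with hx
    · rw [← hcov, Set.mem_iUnion] at hx
      obtain ⟨i, hi⟩ := hx
      rw [Finset.sum_eq_single i]
      · simp [hi]
      · intro j _ hj
        rw [if_neg]
        exact fun hj' => Set.disjoint_left.1 (hdisj j i hj) hj' hi
      · simp
    · refine Finset.sum_eq_zero fun i _ => if_neg fun hi => hx ?_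
      rw [← hcov]; exact Set.mem_iUnion.2 ⟨i, hi⟩
  let H : Finset (ℤ × ℤ) := Finset.univ.image P
  let u : ℤ × ℤ → ℤ × ℤ → ℤ := fun v x => ∑ i with P i = v, χ i x
  have hχ0 : ∀ i x, 0 ≤ χ i x := fun i x => by simp only [χ]; split_ifs <;> simp
  have hχ1 : ∀ i x, χ i x ≤ 1 := fun i x => by simp only [χ]; split_ifs <;> simp
  have hu0 : ∀ v x, 0 ≤ u v x := fun v x => Finset.sum_nonneg fun i _ => hχ0 i x
  have huM : ∀ v x, u v x ≤ m := fun v x => by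
    calc u v x ≤ ∑ i, χ i x :=
          Finset.sum_le_sum_of_subset_of_nonneg (Finset.filter_subset _ _) fun i _ _ => hχ0 i x
      _ ≤ ∑ i : Fin m, 1 := Finset.sum_le_sum fun i _ => hχ1 i x
      _ = m := by simp
  have huv : ∀ v x, u v (x + v) = u v x := fun v x => by
    refine Finset.sum_congr rfl fun i hi => ?_
    obtain rfl := (Finset.mem_filter.1 hi).2
    exact hχP i x
  have husum : ∀ x, ∑ v ∈ H, u v x = if x ∈ C then 1 else 0 := by
    intro x
    rw [← hχsum]
    exact Finset.sum_fiberwise_of_maps_to (fun i _ => Finset.mem_image_of_mem P (Finset.mem_univ i)) _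
  let f : ℤ × ℤ → ℤ × ℤ → ℤ := fun v x => ∑ a ∈ F, u v (x - a)
  have hfv : ∀ v x, f v (x + v) = f v x := fun v x =>
    Finset.sum_congr rfl fun a _ => by rw [add_sub_right_comm, huv]
  have hfsum : ∀ x, ∑ v ∈ H, f v x = 1 := by
    intro x
    simp only [f]
    rw [Finset.sum_comm, ← hFC x]
    exact Finset.sum_congr rfl fun a _ => husum _
  have hfper : ∀ v ∈ H, PerFun (f v) := by
    intro v hvH
    refine per_of_sum v (H.erase v) ?_ f (fun w _ => hfv w) (f v) (∑ a ∈ F, (m : ℤ)) ?_ (hfv v) ?_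
    · intro w hw hd
      obtain ⟨hne, hwH⟩ := Finset.mem_erase.1 hw
      obtain ⟨i, _, rfl⟩ := Finset.mem_image.1 hvH
      obtain ⟨j, _, rfl⟩ := Finset.mem_image.1 hwH
      exact hne (hk i j hd).symm
    · intro x
      rw [abs_of_nonneg (Finset.sum_nonneg fun a _ => hu0 _ _)]
      exact Finset.sum_le_sum fun a _ => huM _ _
    · refine ⟨1, one_ne_zero, fun x y => ?_⟩
      have e : ∀ x, f v x + ∑ w ∈ H.erase v, f w x = 1 := fun x => by
        rw [← hfsum x]; exact Finset.add_sum_erase H (fun w => f w x) hvH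
      exact (e _).trans (e _).symm
  have hsp : ∀ v ∈ H, ∃ u' : ℤ × ℤ → ℤ, PerFun u' ∧ (∀ x, 0 ≤ u' x) ∧
      ∀ x, ∑ a ∈ F, u' (x - a) = f v x := by
    intro v hvH
    refine splice F (u v) v ?_ m (hu0 v) (huM v) (huv v) (hfper v hvH)
    obtain ⟨i, _, rfl⟩ := Finset.mem_image.1 hvH
    exact hk0 i
  choose! u' hu'p hu'0 hu's using hsp
  let U : ℤ × ℤ → ℤ := fun x => ∑ v ∈ H, u' v x
  have hUp : PerFun U := perFun_sum H u' hu'p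
  have hU0 : ∀ x, 0 ≤ U x := fun x => Finset.sum_nonneg fun v hv => hu'0 v hv x
  have hU1 : ∀ x, ∑ a ∈ F, U (x - a) = 1 := by
    intro x
    simp only [U]
    rw [Finset.sum_comm, ← hfsum x]
    exact Finset.sum_congr rfl fun v hv => hu's v hv x
  obtain ⟨a0, ha0⟩ : F.Nonempty := by
    rw [Finset.nonempty_iff_ne_empty]
    rintro rfl
    simpa using hU1 0
  have hUle : ∀ x, U x ≤ 1 := by
    intro x
    rw [← hU1 (x + a0)]
    have := Finset.single_le_sum (f := fun a => U (x + a0 - a)) (fun _ _ => hU0 _) ha0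
    simpa using this
  refine ⟨{x | U x = 1}, ?_, ?_⟩
  · obtain ⟨n, hn, hper⟩ := hUp
    refine ⟨_, finIdx n hn, ?_⟩
    rintro _ ⟨y, _, rfl⟩ x
    simp only [zsmulAddGroupHom_apply, Set.mem_ofPred_eq, hper]
  · rw [tile_iff_s5]
    intro x
    refine Eq.trans ?_ (hU1 x)
    refine Finset.sum_congr rfl fun a _ => ?_
    have h1 := hU0 (x - a)
    have h2 := hUle (x - a)
    simp only [Set.mem_ofPred_eq]
    split_ifs with h3 <;> omega
end
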